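/- arXiv:1311.5163 — 3 statements merged into one kernel-verified Lean document; each statement's English description precedes it below -/
import Mathlib

section
/- Let r ≥ 3, let ζ be a primitive 2^r-th root of unity, and let K = ℚ(ζ − ζ^{-1}), of degree n = 2^{r−2} over ℚ, with D_K the absolute value of its discriminant. Let a_n = (1 − 1/(2n))^n and ε(n) = (ln a_n + ln 2)/(n·ln(2n) − ln 2). Then M(K) ≤ 2^{-n} · (√(D_K))^{1 + ε(n)}. -/
open NumberField IntermediateField

/-- The Euclidean minimum of a number field `K`:
`M(K) = sup_{x ∈ K} inf_{c ∈ O_K} |N_{K/ℚ}(x − c)|`. -/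
noncomputable def euclideanMinimum (K : Type*) [Field K] [NumberField K] : ℝ :=
  ⨆ x : K, ⨅ c : 𝓞 K, |((Algebra.norm ℚ (x - (c : K)) : ℚ) : ℝ)|

set_option linter.unusedSectionVars false
section helper
variable {K L : Type*} [Field K] [NumberField K] [Field L] [NumberField L] [Algebra K L]
  {r : ℕ} {ζ : L} {θ : K}

lemma aux_aut (hζ : IsPrimitiveRoot ζ (2 ^ r)) [IsCyclotomicExtension {2 ^ r} ℚ L]
    {a : ℕ} (ha : a.Coprime (2 ^ r)) : ∃ σ : L ≃ₐ[ℚ] L, σ ζ = ζ ^ a := by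
  have h1 := hζ.pow_of_coprime a ha
  have hirr : Irreducible (Polynomial.cyclotomic (2 ^ r) ℚ) :=
    Polynomial.cyclotomic.irreducible_rat (by positivity)
  refine ⟨(hζ.powerBasis ℚ).equivOfMinpoly (h1.powerBasis ℚ) ?_, ?_⟩
  · simp only [IsPrimitiveRoot.powerBasis_gen]
    exact (hζ.minpoly_eq_cyclotomic_of_irreducible hirr).symm.trans
      (h1.minpoly_eq_cyclotomic_of_irreducible hirr)
  · have := (hζ.powerBasis ℚ).equivOfMinpoly_gen (h1.powerBasis ℚ) (by
      simp only [IsPrimitiveRoot.powerBasis_gen]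
      exact (hζ.minpoly_eq_cyclotomic_of_irreducible hirr).symm.trans
        (h1.minpoly_eq_cyclotomic_of_irreducible hirr))
    simpa only [IsPrimitiveRoot.powerBasis_gen] using this

lemma aux_half (hζ : IsPrimitiveRoot ζ (2 ^ (r + 1))) : ζ ^ (2 ^ r) = -1 := by
  have h := hζ.pow (by positivity) (pow_succ 2 r)
  exact h.eq_neg_one_of_two_right

lemma aux_trace (hζ : IsPrimitiveRoot ζ (2 ^ (r + 1))) [IsCyclotomicExtension {2 ^ (r + 1)} ℚ L]
    {k : ℤ} (hk : ¬ (2 ^ r : ℤ) ∣ k) : Algebra.trace ℚ L (ζ ^ k) = 0 := by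
  have hk0 : k ≠ 0 := by rintro rfl; simp at hk
  obtain ⟨s, m, hm, rfl⟩ : ∃ (s : ℕ) (m : ℤ), Odd m ∧ k = 2 ^ s * m := by
    have hf : FiniteMultiplicity (2 : ℤ) k := by
      rw [Int.finiteMultiplicity_iff]; exact ⟨by decide, hk0⟩
    obtain ⟨m, h1, h2⟩ := hf.exists_eq_pow_mul_and_not_dvd
    exact ⟨_, m, by rwa [← Int.not_even_iff_odd, even_iff_two_dvd], h1⟩
  have hs : s < r := by
    by_contra h
    exact hk (Dvd.dvd.mul_right (pow_dvd_pow _ (by omega)) _)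
  obtain ⟨t, rfl⟩ : ∃ t, r = s + (t + 1) := ⟨r - s - 1, by omega⟩
  have ha : (1 + 2 ^ (t + 1)).Coprime (2 ^ (s + (t + 1) + 1)) := by
    apply Nat.Coprime.pow_right
    rw [Nat.coprime_two_right, pow_succ]
    exact ⟨2 ^ t, by ring⟩
  obtain ⟨σ, hσ⟩ := aux_aut hζ ha
  have hz : ζ ≠ 0 := hζ.ne_zero (by positivity)
  have h2 : σ (ζ ^ (2 ^ s * m : ℤ)) = - ζ ^ (2 ^ s * m : ℤ) := by
    rw [map_zpow₀, hσ, ← zpow_natCast, ← zpow_mul]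
    have : (((1 + 2 ^ (t + 1) : ℕ) : ℤ) * (2 ^ s * m)) =
        2 ^ s * m + ((2 ^ (s + (t + 1)) : ℕ) : ℤ) * m := by
      push_cast; ring
    rw [this, zpow_add₀ hz, zpow_mul ζ ((2 ^ (s + (t + 1)) : ℕ) : ℤ), zpow_natCast, aux_half hζ,
      hm.neg_one_zpow]
    ring
  have h3 := Algebra.trace_eq_of_algEquiv σ (ζ ^ (2 ^ s * m : ℤ))
  rw [h2, map_neg] at h3
  linarith

lemma aux_finrank [IsCyclotomicExtension {2 ^ (r + 1)} ℚ L] : Module.finrank ℚ L = 2 ^ r := by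
  rw [IsCyclotomicExtension.Rat.finrank (2 ^ (r + 1)) L, Nat.totient_prime_pow_succ Nat.prime_two]
  simp

lemma aux_trace_one [IsCyclotomicExtension {2 ^ (r + 1)} ℚ L] :
    Algebra.trace ℚ L 1 = 2 ^ r := by
  have := Algebra.trace_algebraMap (S := L) (1 : ℚ)
  rw [map_one, aux_finrank (r := r)] at this
  simpa using this

lemma aux_trace_mem (hζ : IsPrimitiveRoot ζ (2 ^ (r + 1))) [IsCyclotomicExtension {2 ^ (r + 1)} ℚ L]
    (k : ℤ) : ∃ m : ℤ, Algebra.trace ℚ L (ζ ^ k) = 2 ^ r * m := by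
  by_cases hk : (2 ^ r : ℤ) ∣ k
  · obtain ⟨l, rfl⟩ := hk
    have h : ζ ^ ((2 ^ r : ℤ) * l) = (-1) ^ l := by
      rw [zpow_mul]
      congr 1
      exact_mod_cast aux_half hζ
    rw [h]
    rcases Int.even_or_odd l with hl | hl
    · exact ⟨1, by rw [hl.neg_one_zpow, aux_trace_one (r := r)]; simp⟩
    · exact ⟨-1, by rw [hl.neg_one_zpow, map_neg, aux_trace_one (r := r)]; simp⟩
  · exact ⟨0, by rw [aux_trace hζ hk]; simp⟩

lemma aux_integral_coeff (hζ : IsPrimitiveRoot ζ (2 ^ (r + 1)))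
    [IsCyclotomicExtension {2 ^ (r + 1)} ℚ L] {x : L} (hx : IsIntegral ℤ x) (j : ℤ) :
    ∃ m : ℤ, Algebra.trace ℚ L (x * ζ ^ j) = 2 ^ r * m := by
  have hz : ζ ≠ 0 := hζ.ne_zero (by positivity)
  have := IsCyclotomicExtension.Rat.isIntegralClosure_adjoin_singleton hζ
  obtain ⟨y, hy⟩ := (this.isIntegral_iff).1 hx
  have hxm : x ∈ Algebra.adjoin ℤ {ζ} := hy ▸ y.2
  clear hy hx
  rw [← Subalgebra.mem_toSubmodule, Algebra.adjoin_eq_span] at hxm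
  induction hxm using Submodule.span_induction with
  | mem x h =>
    rw [← Submonoid.powers_eq_closure] at h
    obtain ⟨k, rfl⟩ := h
    obtain ⟨m, hm⟩ := aux_trace_mem hζ (k + j)
    exact ⟨m, by rw [← hm, zpow_add₀ hz, zpow_natCast]⟩
  | zero => exact ⟨0, by simp⟩
  | add x y _ _ hx hy =>
    obtain ⟨m, hm⟩ := hx
    obtain ⟨m', hm'⟩ := hy
    exact ⟨m + m', by rw [add_mul, map_add, hm, hm']; push_cast; ring⟩
  | smul a x _ hx =>
    obtain ⟨m, hm⟩ := hx
    exact ⟨a * m, by rw [smul_mul_assoc, map_zsmul, hm]; simp; ring⟩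

/-- The elements `ζ^k + (-ζ⁻¹)^k`. -/
def auxE (θ : K) : ℕ → K
  | 0 => 2
  | 1 => θ
  | (k + 2) => θ * auxE θ (k + 1) + auxE θ k

/-- The basis `1, E_1, …, E_{n-1}`. -/
def auxB (θ : K) (k : ℕ) : K := if k = 0 then 1 else auxE θ k

lemma auxE_map (hz : ζ ≠ 0) (hθ : algebraMap K L θ = ζ - ζ⁻¹) (k : ℕ) :
    algebraMap K L (auxE θ k) = ζ ^ (k : ℤ) + (-1) ^ k * ζ ^ (-k : ℤ) := by
  induction k using auxE.induct with
  | case1 => rw [auxE, map_ofNat]; simp; norm_num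
  | case2 => simp [auxE, hθ]; ring
  | case3 k h1 h2 =>
    change algebraMap K L (auxE θ (k + 2)) = ζ ^ ((k + 2 : ℕ) : ℤ) + (-1) ^ (k + 2) * ζ ^ (-((k + 2 : ℕ) : ℤ))
    rw [auxE, map_add, map_mul, h1, h2, hθ]
    simp only [zpow_neg, zpow_natCast]
    field_simp
    ring

lemma auxB_map (hz : ζ ≠ 0) (hθ : algebraMap K L θ = ζ - ζ⁻¹) {k : ℕ} (hk : k ≠ 0) :
    algebraMap K L (auxB θ k) = ζ ^ (k : ℤ) + (-1) ^ k * ζ ^ (-k : ℤ) := by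
  rw [auxB, if_neg hk, auxE_map hz hθ]

lemma auxB_integral (hζ : IsPrimitiveRoot ζ (2 ^ r))
    (hθ : algebraMap K L θ = ζ - ζ⁻¹) (k : ℕ) : IsIntegral ℤ (auxB θ k) := by
  have hz : ζ ≠ 0 := hζ.ne_zero (by positivity)
  rw [← isIntegral_algebraMap_iff (algebraMap K L).injective (B := L)]
  have h1 : IsIntegral ℤ ζ := hζ.isIntegral (by positivity)
  have h2 : IsIntegral ℤ ζ⁻¹ := hζ.inv.isIntegral (by positivity)
  by_cases hk : k = 0
  · subst hk; simp [auxB]; exact isIntegral_one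
  · rw [auxB_map hz hθ hk, zpow_neg, zpow_natCast, ← inv_pow]
    exact (h1.pow _).add (((isIntegral_one.neg).pow _).mul (h2.pow _))

lemma aux_span (hζ : IsPrimitiveRoot ζ (2 ^ (r + 3)))
    (hθ : algebraMap K L θ = ζ - ζ⁻¹) (hgen : Algebra.adjoin ℚ {θ} = ⊤) :
    Submodule.span ℚ (Set.range fun i : Fin (2 ^ (r + 1)) => auxB θ i) = ⊤ := by
  have hz : ζ ≠ 0 := hζ.ne_zero (by positivity)
  set S := Submodule.span ℚ (Set.range fun i : Fin (2 ^ (r + 1)) => auxB θ i) with hS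
  have hEn : auxE θ (2 ^ (r + 1)) = 0 := by
    apply (algebraMap K L).injective
    have h : ζ ^ (2 ^ (r + 2)) = -1 := aux_half hζ
    have hev : Even (2 ^ (r + 1)) := ⟨2 ^ r, by ring⟩
    rw [auxE_map hz hθ, map_zero, hev.neg_one_pow, zpow_neg, zpow_natCast, one_mul]
    have h0 : ζ ^ (2 ^ (r + 1)) ≠ 0 := pow_ne_zero _ hz
    field_simp
    rw [← pow_mul, ← pow_succ, h]; ring
  have hB : ∀ i < 2 ^ (r + 1), auxB θ i ∈ S := fun i hi =>
    Submodule.subset_span ⟨⟨i, hi⟩, rfl⟩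
  have h1 : (1 : K) ∈ S := by
    have := hB 0 (by positivity); simpa [auxB] using this
  have hE : ∀ i ≤ 2 ^ (r + 1), auxE θ i ∈ S := by
    intro i hi
    rcases Nat.eq_zero_or_pos i with rfl | hi0
    · have := S.smul_mem (2 : ℚ) h1
      rw [auxE]
      convert this using 1
      rw [Algebra.smul_def]; simp
    rcases hi.lt_or_eq with h | rfl
    · have := hB i h
      rwa [auxB, if_neg hi0.ne'] at this
    · rw [hEn]; exact S.zero_mem
  have hmul : ∀ x ∈ S, θ * x ∈ S := by
    intro x hx
    induction hx using Submodule.span_induction with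
    | mem x h =>
      obtain ⟨⟨i, hi⟩, rfl⟩ := h
      simp only
      rcases i with _ | i
      · simp only [auxB, if_true, mul_one]
        exact hE 1 (Nat.one_le_two_pow)
      · have : θ * auxB θ (i + 1) = auxE θ (i + 2) - auxE θ i := by
          simp only [auxB, auxE]; simp
        rw [this]
        exact S.sub_mem (hE _ (by omega)) (hE _ (by omega))
    | zero => simp
    | add x y _ _ hx hy => rw [mul_add]; exact S.add_mem hx hy
    | smul a x _ hx => rw [mul_smul_comm]; exact S.smul_mem _ hx
  rw [eq_top_iff]
  intro x _
  have hx : x ∈ Algebra.adjoin ℚ {θ} := by rw [hgen]; trivial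
  rw [← Subalgebra.mem_toSubmodule, Algebra.adjoin_eq_span] at hx
  refine (Submodule.span_le.2 ?_) hx
  intro y hy
  rw [← Submonoid.powers_eq_closure] at hy
  obtain ⟨k, rfl⟩ := hy
  induction k with
  | zero => simpa using h1
  | succ k ih =>
    simp only [SetLike.mem_coe] at ih ⊢
    rw [pow_succ']; exact hmul _ ih

/-- Diagonal weights. -/
def auxW (r j : ℕ) : ℚ := if j = 0 then 2 ^ (r + 2) else 2 ^ (r + 3)

lemma aux_traceL (hζ : IsPrimitiveRoot ζ (2 ^ (r + 3))) [IsCyclotomicExtension {2 ^ (r + 3)} ℚ L]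
    (hθ : algebraMap K L θ = ζ - ζ⁻¹) {i j : ℕ} (hi : i < 2 ^ (r + 1)) (hj : j < 2 ^ (r + 1)) :
    Algebra.trace ℚ L (algebraMap K L (auxB θ i) * algebraMap K L (auxB θ j)) =
      if i = j then (-1) ^ j * auxW r j else 0 := by
  have hz : ζ ≠ 0 := hζ.ne_zero (by positivity)
  have hi' : (i : ℤ) < 2 ^ (r + 1) := by exact_mod_cast hi
  have hj' : (j : ℤ) < 2 ^ (r + 1) := by exact_mod_cast hj
  have hpow : (2 : ℤ) ^ (r + 2) = 2 * 2 ^ (r + 1) := by ring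
  have hT : ∀ k : ℤ, k ≠ 0 → |k| < 2 ^ (r + 2) → Algebra.trace ℚ L (ζ ^ k) = 0 := by
    intro k hk h
    exact aux_trace hζ (fun hd => hk (Int.eq_zero_of_abs_lt_dvd hd h))
  have hneg : ∀ (m : ℕ) (x : L), Algebra.trace ℚ L ((-1) ^ m * x) = (-1) ^ m * Algebra.trace ℚ L x := by
    intro m x
    rcases Nat.even_or_odd m with h | h <;> simp [h.neg_one_pow]
  have h1 := aux_trace_one (L := L) (r := r + 2)
  rcases Nat.eq_zero_or_pos i with rfl | hi0
  · rcases Nat.eq_zero_or_pos j with rfl | hj0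
    · simpa [auxB, auxW] using h1
    · rw [auxB_map hz hθ hj0.ne', auxB, if_pos rfl, map_one, one_mul, map_add, hneg,
        hT _ (by omega) (by rw [abs_lt]; omega), hT _ (by omega) (by rw [abs_lt]; omega), if_neg (by omega)]
      simp
  · rcases Nat.eq_zero_or_pos j with rfl | hj0
    · rw [auxB_map hz hθ hi0.ne', auxB, if_pos rfl, map_one, mul_one, map_add, hneg,
        hT _ (by omega) (by rw [abs_lt]; omega), hT _ (by omega) (by rw [abs_lt]; omega), if_neg (by omega)]
      simp
    · have : algebraMap K L (auxB θ i) * algebraMap K L (auxB θ j) =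
          ζ ^ (i + j : ℤ) + (-1) ^ (i + j) * ζ ^ (-(i + j) : ℤ) + (-1) ^ j * ζ ^ (i - j : ℤ)
            + (-1) ^ i * ζ ^ (j - i : ℤ) := by
        rw [auxB_map hz hθ hi0.ne', auxB_map hz hθ hj0.ne', zpow_add₀ hz, neg_add, zpow_add₀ hz,
          sub_eq_add_neg, zpow_add₀ hz, sub_eq_add_neg, zpow_add₀ hz]
        ring
      rw [this]
      simp only [map_add, hneg]
      rw [hT (i + j) (by omega) (by rw [abs_lt]; omega), hT (-(i + j)) (by omega) (by rw [abs_lt]; omega)]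
      split_ifs with h
      · subst h
        rw [sub_self, zpow_zero, h1, auxW, if_neg hi0.ne']
        ring
      · rw [hT (i - j) (by omega) (by rw [abs_lt]; omega), hT (j - i) (by omega) (by rw [abs_lt]; omega)]
        ring

lemma aux_traceZ (hζ : IsPrimitiveRoot ζ (2 ^ (r + 3))) [IsCyclotomicExtension {2 ^ (r + 3)} ℚ L]
    (hθ : algebraMap K L θ = ζ - ζ⁻¹) {i j : ℕ} (hi : i < 2 ^ (r + 1)) (hj : j < 2 ^ (r + 1)) :
    Algebra.trace ℚ L (algebraMap K L (auxB θ i) * ζ ^ (-j : ℤ)) =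
      if i = j then 2 ^ (r + 2) else 0 := by
  have hz : ζ ≠ 0 := hζ.ne_zero (by positivity)
  have hi' : (i : ℤ) < 2 ^ (r + 1) := by exact_mod_cast hi
  have hj' : (j : ℤ) < 2 ^ (r + 1) := by exact_mod_cast hj
  have hpow : (2 : ℤ) ^ (r + 2) = 2 * 2 ^ (r + 1) := by ring
  have hT : ∀ k : ℤ, k ≠ 0 → |k| < 2 ^ (r + 2) → Algebra.trace ℚ L (ζ ^ k) = 0 := by
    intro k hk h
    exact aux_trace hζ (fun hd => hk (Int.eq_zero_of_abs_lt_dvd hd h))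
  have hneg : ∀ (m : ℕ) (x : L), Algebra.trace ℚ L ((-1) ^ m * x) = (-1) ^ m * Algebra.trace ℚ L x := by
    intro m x
    rcases Nat.even_or_odd m with h | h <;> simp [h.neg_one_pow]
  have h1 := aux_trace_one (L := L) (r := r + 2)
  rcases Nat.eq_zero_or_pos i with rfl | hi0
  · rw [auxB, if_pos rfl, map_one, one_mul]
    split_ifs with h
    · subst h; simpa using h1
    · exact hT _ (by omega) (by rw [abs_lt]; omega)
  · rw [auxB_map hz hθ hi0.ne', add_mul, mul_assoc, ← zpow_add₀ hz, ← zpow_add₀ hz, map_add, hneg,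
      hT (-i + -j) (by omega) (by rw [abs_lt]; omega)]
    split_ifs with h
    · subst h
      rw [add_neg_cancel, zpow_zero, h1]; ring
    · rw [hT _ (by omega) (by rw [abs_lt]; omega)]; ring

lemma aux_smul (q : ℚ) (x : K) : algebraMap K L (q • x) = q • algebraMap K L x := by
  rw [Algebra.smul_def, Algebra.smul_def, map_mul, ← IsScalarTower.algebraMap_apply]

lemma aux_amgm {ι : Type*} [Fintype ι] (z : ι → ℝ) (hz : ∀ i, 0 ≤ z i) {c : ℝ} {N : ℕ}
    (hN : Fintype.card ι = N) (hN0 : N ≠ 0) (h : ∑ i, z i ≤ N * c) : ∏ i, z i ≤ c ^ N := by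
  have hNp : (0 : ℝ) < N := by positivity
  have h1 := Real.geom_mean_le_arith_mean_weighted Finset.univ (fun _ => (N : ℝ)⁻¹) z
    (fun _ _ => by positivity) (by simp [hN]; field_simp) (fun i _ => hz i)
  rw [← Finset.mul_sum, Real.finsetProd_rpow _ _ (fun i _ => hz i)] at h1
  have h2 : (∏ i, z i) ^ (N : ℝ)⁻¹ ≤ c := by
    refine h1.trans ?_
    rw [inv_mul_le_iff₀ hNp]; exact h
  have h0 : 0 ≤ ∏ i, z i := Finset.prod_nonneg fun i _ => hz i
  calc ∏ i, z i = ((∏ i, z i) ^ (N : ℝ)⁻¹) ^ N := (Real.rpow_inv_natCast_pow h0 hN0).symm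
    _ ≤ c ^ N := pow_le_pow_left₀ (Real.rpow_nonneg h0 _) h2 _

lemma aux_coeff (hζ : IsPrimitiveRoot ζ (2 ^ (r + 3))) [IsCyclotomicExtension {2 ^ (r + 3)} ℚ L]
    (hθ : algebraMap K L θ = ζ - ζ⁻¹) (t : Fin (2 ^ (r + 1)) → ℚ) (j : Fin (2 ^ (r + 1))) :
    Algebra.trace ℚ L (algebraMap K L (∑ i, t i • auxB θ i) * ζ ^ (-(j : ℕ) : ℤ)) =
      2 ^ (r + 2) * t j := by
  have h : algebraMap K L (∑ i, t i • auxB θ i) * ζ ^ (-(j : ℕ) : ℤ) =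
      ∑ i, t i • (algebraMap K L (auxB θ i) * ζ ^ (-(j : ℕ) : ℤ)) := by
    rw [map_sum, Finset.sum_mul]
    refine Finset.sum_congr rfl fun i _ => ?_
    rw [aux_smul, smul_mul_assoc]
  rw [h, map_sum]
  simp only [map_smul, aux_traceZ hζ hθ (Fin.is_lt _) (Fin.is_lt _), Fin.val_inj, smul_eq_mul,
    mul_ite, mul_zero]
  rw [Finset.sum_ite_eq' Finset.univ j]
  simp [mul_comm]

lemma aux_basis (hζ : IsPrimitiveRoot ζ (2 ^ (r + 3))) [IsCyclotomicExtension {2 ^ (r + 3)} ℚ L]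
    (hθ : algebraMap K L θ = ζ - ζ⁻¹) (hgen : Algebra.adjoin ℚ {θ} = ⊤) :
    ∃ b : Module.Basis (Fin (2 ^ (r + 1))) ℚ K, ∀ i, b i = auxB θ i := by
  have hli : LinearIndependent ℚ (fun i : Fin (2 ^ (r + 1)) => auxB θ i) := by
    rw [Fintype.linearIndependent_iff]
    intro t ht j
    have := aux_coeff hζ hθ t j
    rw [ht] at this
    simpa using this
  exact ⟨Module.Basis.mk hli (aux_span hζ hθ hgen).ge, fun i => by simp⟩

lemma aux_finrank2 (hζ : IsPrimitiveRoot ζ (2 ^ (r + 3))) [IsCyclotomicExtension {2 ^ (r + 3)} ℚ L]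
    (hθ : algebraMap K L θ = ζ - ζ⁻¹) (hgen : Algebra.adjoin ℚ {θ} = ⊤) :
    Module.finrank K L = 2 := by
  obtain ⟨b, -⟩ := aux_basis hζ hθ hgen
  have h1 : Module.finrank ℚ K = 2 ^ (r + 1) := by
    rw [Module.finrank_eq_card_basis b, Fintype.card_fin]
  have h2 : Module.finrank ℚ L = 2 ^ (r + 2) := aux_finrank
  have h3 := Module.finrank_mul_finrank ℚ K L
  rw [h1, h2, pow_succ 2 (r + 1)] at h3
  exact Nat.eq_of_mul_eq_mul_left (by positivity) h3

lemma aux_discr (hζ : IsPrimitiveRoot ζ (2 ^ (r + 3))) [IsCyclotomicExtension {2 ^ (r + 3)} ℚ L]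
    (hθ : algebraMap K L θ = ζ - ζ⁻¹) (hgen : Algebra.adjoin ℚ {θ} = ⊤) :
    |(NumberField.discr K : ℚ)| = (2 ^ (r + 2)) ^ (2 ^ (r + 1)) / 2 := by
  obtain ⟨b, hb⟩ := aux_basis hζ hθ hgen
  have hf := aux_finrank2 hζ hθ hgen
  have h1 : (NumberField.discr K : ℚ) = Algebra.discr ℚ b := by
    rw [NumberField.coe_discr]
    apply Algebra.discr_eq_discr_of_toMatrix_coeff_isIntegral
    · intro i j
      rw [Module.Basis.toMatrix_apply, hb]
      obtain ⟨y, hy⟩ : ∃ y : 𝓞 K, algebraMap (𝓞 K) K y = auxB θ j :=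
        ⟨⟨auxB θ j, auxB_integral hζ hθ j⟩, rfl⟩
      rw [← hy, NumberField.integralBasis_repr_apply]
      exact isIntegral_algebraMap
    · intro i j
      rw [Module.Basis.toMatrix_apply]
      set x := NumberField.integralBasis K j with hx
      have hxi : IsIntegral ℤ x := by
        rw [hx, NumberField.integralBasis_apply]
        exact NumberField.RingOfIntegers.isIntegral_coe _
      obtain ⟨m, hm⟩ := aux_integral_coeff hζ (hxi.algebraMap (B := L)) (-(i : ℕ) : ℤ)
      have h2 := aux_coeff hζ hθ (fun i => b.repr x i) i
      have h3 : ∑ i, b.repr x i • auxB θ i = x := by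
        simp only [← hb]; exact b.sum_repr x
      rw [h3, hm] at h2
      have h4 : b.repr x i = m := by
        have : (2 : ℚ) ^ (r + 2) ≠ 0 := by positivity
        exact (mul_left_cancel₀ this h2).symm
      rw [h4]
      exact isIntegral_algebraMap (R := ℤ) (x := m)
  rw [h1, Algebra.discr_def]
  have h2 : Algebra.traceMatrix ℚ b =
      Matrix.diagonal fun i : Fin (2 ^ (r + 1)) => (-1) ^ (i : ℕ) * auxW r i / 2 := by
    ext i j
    rw [Algebra.traceMatrix_apply, Algebra.traceForm_apply, hb, hb, Matrix.diagonal_apply]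
    have h3 := aux_traceL hζ hθ i.is_lt j.is_lt
    rw [← map_mul, ← Algebra.trace_trace (S := K), Algebra.trace_algebraMap, hf, map_nsmul] at h3
    simp only [Fin.val_inj] at h3
    split_ifs with h
    · rw [if_pos h] at h3
      subst h
      rw [← h3]; simp
    · rw [if_neg h] at h3
      simpa using h3
  rw [h2, Matrix.det_diagonal, Finset.abs_prod]
  have h3 : ∀ i : ℕ, |(-1) ^ i * auxW r i / 2| = if i = 0 then (2 : ℚ) ^ (r + 1) else 2 ^ (r + 2) := by
    intro i
    rw [abs_div, abs_mul, abs_pow, abs_neg, abs_one, one_pow, one_mul, auxW]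
    split_ifs
    · rw [abs_of_pos (by positivity), abs_of_pos (by positivity)]; ring
    · rw [abs_of_pos (by positivity), abs_of_pos (by positivity)]; ring
  simp only [h3]
  rw [Fin.prod_univ_eq_prod_range (fun i => if i = 0 then (2 : ℚ) ^ (r + 1) else 2 ^ (r + 2))]
  obtain ⟨N, hN⟩ : ∃ N, 2 ^ (r + 1) = N + 1 := ⟨2 ^ (r + 1) - 1, by
    have : 0 < 2 ^ (r + 1) := by positivity
    omega⟩
  rw [hN, Finset.prod_range_succ']
  simp
  ring

lemma aux_norm (hζ : IsPrimitiveRoot ζ (2 ^ (r + 3))) [IsCyclotomicExtension {2 ^ (r + 3)} ℚ L]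
    (hθ : algebraMap K L θ = ζ - ζ⁻¹) (hgen : Algebra.adjoin ℚ {θ} = ⊤)
    (t : Fin (2 ^ (r + 1)) → ℚ) (ht : ∀ i, |t i| ≤ 1 / 2) :
    |((Algebra.norm ℚ (∑ i, t i • auxB θ i) : ℚ) : ℝ)| ^ 4 ≤
      ((2 ^ (r + 2) - 1) / 4) ^ (2 ^ (r + 2)) := by
  classical
  have hf := aux_finrank2 hζ hθ hgen
  have hz : ζ ≠ 0 := hζ.ne_zero (by positivity)
  set y := ∑ i, t i • auxB θ i with hy
  set y' : K := ∑ i : Fin (2 ^ (r + 1)), ((-1) ^ (i : ℕ) * t i) • auxB θ i with hy'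
  have hcard : Fintype.card (L →ₐ[ℚ] ℂ) = 2 ^ (r + 2) := by
    rw [AlgHom.card ℚ L ℂ, aux_finrank (r := r + 2)]
  have hconjB : ∀ (σ : L →ₐ[ℚ] ℂ) (i : ℕ), starRingEnd ℂ (σ (algebraMap K L (auxB θ i))) =
      (-1) ^ i * σ (algebraMap K L (auxB θ i)) := by
    intro σ i
    have hs : starRingEnd ℂ (σ ζ) = (σ ζ)⁻¹ := by
      refine (Complex.inv_eq_conj ?_).symm
      refine Complex.norm_eq_one_of_pow_eq_one (n := 2 ^ (r + 3)) ?_ (by positivity)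
      rw [← map_pow, hζ.pow_eq_one, map_one]
    by_cases hi : i = 0
    · subst hi; simp [auxB]
    · have hs0 : σ ζ ≠ 0 := by simpa using hz
      rw [auxB_map hz hθ hi]
      simp only [map_add, map_mul, map_zpow₀, map_pow, map_neg, map_one, hs]
      simp only [zpow_neg, zpow_natCast, inv_pow, inv_inv]
      rcases Nat.even_or_odd i with h | h <;> simp [h.neg_one_pow] <;> ring
  have hconj : ∀ σ : L →ₐ[ℚ] ℂ, starRingEnd ℂ (σ (algebraMap K L y)) = σ (algebraMap K L y') := by
    intro σ
    simp only [hy, hy', map_sum]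
    refine Finset.sum_congr rfl fun i _ => ?_
    rw [aux_smul, aux_smul, Algebra.smul_def, Algebra.smul_def, map_mul, map_mul, map_mul, hconjB]
    simp
    ring
  have htr : Algebra.trace ℚ L (algebraMap K L y * algebraMap K L y') =
      ∑ i : Fin (2 ^ (r + 1)), t i ^ 2 * auxW r i := by
    have h : algebraMap K L y * algebraMap K L y' = ∑ i, ∑ j : Fin (2 ^ (r + 1)),
        (t i * ((-1) ^ (j : ℕ) * t j)) • (algebraMap K L (auxB θ i) * algebraMap K L (auxB θ j)) := by
      simp only [hy, hy', map_sum, Finset.sum_mul_sum]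
      refine Finset.sum_congr rfl fun i _ => Finset.sum_congr rfl fun j _ => ?_
      rw [aux_smul, aux_smul, smul_mul_smul_comm]
    rw [h, map_sum]
    refine Finset.sum_congr rfl fun i _ => ?_
    rw [map_sum]
    simp only [map_smul, aux_traceL hζ hθ (Fin.is_lt _) (Fin.is_lt _), Fin.val_inj, smul_eq_mul,
      mul_ite, mul_zero]
    rw [Finset.sum_ite_eq Finset.univ i]
    have : ((-1 : ℚ) ^ (i : ℕ)) * (-1) ^ (i : ℕ) = 1 := by
      rw [← mul_pow]; simp
    simp only [Finset.mem_univ, if_true]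
    linear_combination (t i ^ 2 * auxW r i) * this
  have hsum : ∑ σ : L →ₐ[ℚ] ℂ, ‖σ (algebraMap K L y)‖ ^ 2 =
      ((∑ i : Fin (2 ^ (r + 1)), t i ^ 2 * auxW r i : ℚ) : ℝ) := by
    rw [← htr]
    apply Complex.ofReal_injective
    have h := trace_eq_sum_embeddings (K := ℚ) (L := L) ℂ (x := algebraMap K L y * algebraMap K L y')
    have h' : ((((Algebra.trace ℚ L) (algebraMap K L y * algebraMap K L y') : ℚ) : ℝ) : ℂ) =
      algebraMap ℚ ℂ ((Algebra.trace ℚ L) (algebraMap K L y * algebraMap K L y')) := by simp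
    rw [h', h, Complex.ofReal_sum]
    refine Finset.sum_congr rfl fun σ _ => ?_
    rw [map_mul, ← hconj, Complex.mul_conj, Complex.normSq_eq_norm_sq]
  have hbound : ∑ i : Fin (2 ^ (r + 1)), t i ^ 2 * auxW r i ≤ 2 ^ (r + 2) * ((2 ^ (r + 2) - 1) / 4) := by
    calc ∑ i : Fin (2 ^ (r + 1)), t i ^ 2 * auxW r i
        ≤ ∑ i : Fin (2 ^ (r + 1)), (1 / 4) * auxW r i := by
          refine Finset.sum_le_sum fun i _ => ?_
          have h0 : 0 ≤ auxW r i := by rw [auxW]; split_ifs <;> positivity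
          have := abs_le.1 (ht i)
          refine mul_le_mul_of_nonneg_right ?_ h0
          nlinarith
      _ = 2 ^ (r + 2) * ((2 ^ (r + 2) - 1) / 4) := by
          rw [Fin.sum_univ_eq_sum_range (fun i => 1 / 4 * auxW r i)]
          obtain ⟨N, hN⟩ : ∃ N, 2 ^ (r + 1) = N + 1 := ⟨2 ^ (r + 1) - 1, by
            have : 0 < 2 ^ (r + 1) := by positivity
            omega⟩
          have hN' : (2 : ℚ) ^ (r + 1) = N + 1 := by exact_mod_cast hN
          have e2 : (2 : ℚ) ^ (r + 2) = 2 * (N + 1) := by rw [← hN']; ring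
          have e3 : (2 : ℚ) ^ (r + 3) = 4 * (N + 1) := by rw [← hN']; ring
          rw [hN, Finset.sum_range_succ']
          simp [auxW, e2, e3]
          ring
  have hprod : (|((Algebra.norm ℚ y : ℚ) : ℝ)| ^ 2) = ∏ σ : L →ₐ[ℚ] ℂ, ‖σ (algebraMap K L y)‖ := by
    have h := Algebra.norm_eq_prod_embeddings ℚ ℂ (algebraMap K L y)
    rw [← Algebra.norm_norm (S := K), Algebra.norm_algebraMap, hf] at h
    have h' := congrArg norm h
    rw [norm_prod] at h'
    rw [← h']
    simp
  have hamgm := aux_amgm (fun σ : L →ₐ[ℚ] ℂ => ‖σ (algebraMap K L y)‖ ^ 2) (fun σ => by positivity)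
    (c := (2 ^ (r + 2) - 1) / 4) hcard (by positivity) (by
      rw [hsum]
      have : ((∑ i : Fin (2 ^ (r + 1)), t i ^ 2 * auxW r i : ℚ) : ℝ) ≤
        ((2 ^ (r + 2) * ((2 ^ (r + 2) - 1) / 4) : ℚ) : ℝ) := Rat.cast_le.2 hbound
      refine this.trans (le_of_eq ?_)
      push_cast; ring)
  rw [Finset.prod_pow, ← hprod] at hamgm
  calc _ = _ := by ring
    _ ≤ _ := hamgm

lemma aux_min (hζ : IsPrimitiveRoot ζ (2 ^ (r + 3))) [IsCyclotomicExtension {2 ^ (r + 3)} ℚ L]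
    (hθ : algebraMap K L θ = ζ - ζ⁻¹) (hgen : Algebra.adjoin ℚ {θ} = ⊤) {C : ℝ} (hC : 0 ≤ C)
    (hC4 : C ^ 4 = ((2 ^ (r + 2) - 1) / 4) ^ (2 ^ (r + 2))) : euclideanMinimum K ≤ C := by
  obtain ⟨b, hb⟩ := aux_basis hζ hθ hgen
  refine ciSup_le fun x => ?_
  have hex : ∀ i : ℕ, ∃ y : 𝓞 K, algebraMap (𝓞 K) K y = auxB θ i :=
    fun i => ⟨⟨auxB θ i, auxB_integral hζ hθ i⟩, rfl⟩
  choose B' hB' using hex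
  let c : 𝓞 K := ∑ i : Fin (2 ^ (r + 1)), round (b.repr x i) • B' i
  have hc : (c : K) = ∑ i : Fin (2 ^ (r + 1)), (round (b.repr x i) : ℚ) • auxB θ i := by
    change algebraMap (𝓞 K) K c = _
    simp only [c]
    rw [map_sum]
    refine Finset.sum_congr rfl fun i _ => ?_
    rw [map_zsmul, Int.cast_smul_eq_zsmul, hB']
  have hx : x - (c : K) = ∑ i : Fin (2 ^ (r + 1)), (b.repr x i - round (b.repr x i)) • auxB θ i := by
    rw [hc]
    simp only [sub_smul, Finset.sum_sub_distrib]
    congr 1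
    simp only [← hb]; exact (b.sum_repr x).symm
  refine ciInf_le_of_le ⟨0, ?_⟩ c ?_
  · rintro _ ⟨_, rfl⟩; exact abs_nonneg _
  · have h := aux_norm hζ hθ hgen (fun i => b.repr x i - round (b.repr x i))
      (fun i => abs_sub_round _)
    rw [← hx, ← hC4] at h
    exact le_of_pow_le_pow_left₀ (by norm_num) hC h

lemma aux_rhs {D : ℝ} (hD : D = (2 ^ (r + 2)) ^ (2 ^ (r + 1)) / 2) {C : ℝ}
    (hC : C = (2 : ℝ)⁻¹ ^ (2 ^ (r + 1)) *
        (Real.sqrt D) ^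
          (1 + (Real.log ((1 - 1 / (2 * (2 : ℝ) ^ (r + 1))) ^ (2 ^ (r + 1) : ℕ)) + Real.log 2) /
            ((2 : ℝ) ^ (r + 1) * Real.log (2 * (2 : ℝ) ^ (r + 1)) - Real.log 2))) :
    0 ≤ C ∧ C ^ 4 = ((2 ^ (r + 2) - 1) / 4) ^ (2 ^ (r + 2)) := by
  have hDp : 0 < D := by rw [hD]; positivity
  refine ⟨by rw [hC]; positivity, ?_⟩
  set N : ℕ := 2 ^ (r + 1) with hN
  have hNr : (2 : ℝ) ^ (r + 1) = N := by rw [hN]; push_cast; rfl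
  have hN2 : (2 : ℝ) ^ (r + 2) = 2 * N := by rw [← hNr]; ring
  have hN2' : 2 ^ (r + 2) = N * 2 := by rw [hN]; ring
  have hN1 : (2 : ℝ) ≤ N := by
    rw [← hNr, pow_succ]
    have : (1 : ℝ) ≤ 2 ^ r := one_le_pow₀ (by norm_num)
    linarith
  rw [hN2] at hD ⊢
  rw [hNr] at hC
  rw [hN2']
  have hlogD : Real.log D = N * Real.log (2 * N) - Real.log 2 := by
    rw [hD, Real.log_div (by positivity) (by norm_num), Real.log_pow]
  have hD1 : 1 < D := by
    rw [hD, lt_div_iff₀ (by norm_num)]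
    have : (2 * (N : ℝ)) ^ 1 ≤ (2 * N) ^ N :=
      pow_le_pow_right₀ (by linarith) (by exact_mod_cast (by linarith : (1 : ℝ) ≤ N))
    linarith
  have hL : 0 < Real.log D := Real.log_pos hD1
  have ha : (0 : ℝ) < 1 - 1 / (2 * N) := by
    rw [sub_pos, div_lt_one (by linarith)]; linarith
  rw [← hlogD] at hC
  set A : ℝ := (1 - 1 / (2 * N)) ^ N with hA
  have hAp : 0 < A := by positivity
  have hs : (Real.sqrt D ^ (1 + (Real.log A + Real.log 2) / Real.log D)) ^ 2 = D * (A * 2) := by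
    rw [← Real.rpow_natCast, ← Real.rpow_mul (Real.sqrt_nonneg _), mul_comm, Real.rpow_mul (Real.sqrt_nonneg _),
      Real.rpow_natCast, Real.sq_sqrt hDp.le, Real.rpow_def_of_pos hDp,
      ← Real.log_mul hAp.ne' (by norm_num), mul_add, mul_one, mul_div_cancel₀ _ hL.ne', Real.exp_add,
      Real.exp_log hDp, Real.exp_log (by positivity)]
  have hDA : D * (A * 2) = (2 * N - 1) ^ N := by
    rw [hD, hA]
    have : (2 * N - 1 : ℝ) = (2 * N) * (1 - 1 / (2 * N)) := by field_simp
    rw [this, mul_pow (2 * (N : ℝ)) (1 - 1 / (2 * (N : ℝ)))]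
    generalize (1 - 1 / (2 * (N : ℝ))) ^ N = u
    ring
  calc C ^ 4 = (((2 : ℝ)⁻¹ ^ N) ^ 2 * (Real.sqrt D ^ (1 + (Real.log A + Real.log 2) / Real.log D)) ^ 2) ^ 2 := by
        rw [hC]; ring
    _ = _ := by
        rw [hs, hDA, ← pow_mul, mul_comm N 2, pow_mul, ← mul_pow, ← pow_mul, mul_comm 2 N]
        congr 1
        ring

end helper

theorem euclideanMinimum_adjoin_zeta_sub_zeta_inv_le_eps
    (r : ℕ) (hr : 3 ≤ r) (ζ : ℂ) (hζ : IsPrimitiveRoot ζ (2 ^ r))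
    [NumberField ℚ⟮ζ - ζ⁻¹⟯] :
    euclideanMinimum ℚ⟮ζ - ζ⁻¹⟯ ≤
      (2 : ℝ)⁻¹ ^ (2 ^ (r - 2)) *
        (Real.sqrt |(NumberField.discr ℚ⟮ζ - ζ⁻¹⟯ : ℝ)|) ^
          (1 + (Real.log ((1 - 1 / (2 * (2 : ℝ) ^ (r - 2))) ^ (2 ^ (r - 2) : ℕ)) + Real.log 2) /
            ((2 : ℝ) ^ (r - 2) * Real.log (2 * (2 : ℝ) ^ (r - 2)) - Real.log 2)) := by
  obtain ⟨s, rfl⟩ : ∃ s, r = s + 3 := ⟨r - 3, by omega⟩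
  have hint : IsIntegral ℚ ζ := hζ.isIntegral (by positivity) |>.tower_top
  have hcyc : IsCyclotomicExtension {2 ^ (s + 3)} ℚ ℚ⟮ζ⟯ := by
    change IsCyclotomicExtension {2 ^ (s + 3)} ℚ ℚ⟮ζ⟯.toSubalgebra
    rw [IntermediateField.adjoin_simple_toSubalgebra_of_isAlgebraic hint.isAlgebraic]
    exact hζ.adjoin_isCyclotomicExtension ℚ
  have hnf : NumberField ℚ⟮ζ⟯ := IsCyclotomicExtension.numberField {2 ^ (s + 3)} ℚ _
  have hmem : ζ ∈ ℚ⟮ζ⟯ := IntermediateField.mem_adjoin_simple_self ℚ ζ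
  have hle : ℚ⟮ζ - ζ⁻¹⟯ ≤ ℚ⟮ζ⟯ := by
    rw [IntermediateField.adjoin_simple_le_iff]
    exact sub_mem hmem (inv_mem hmem)
  let _ : Algebra ℚ⟮ζ - ζ⁻¹⟯ ℚ⟮ζ⟯ := (IntermediateField.inclusion hle).toRingHom.toAlgebra
  let z : ℚ⟮ζ⟯ := ⟨ζ, hmem⟩
  let θ : ℚ⟮ζ - ζ⁻¹⟯ := IntermediateField.AdjoinSimple.gen ℚ (ζ - ζ⁻¹)
  have hz : IsPrimitiveRoot z (2 ^ (s + 3)) :=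
    IsPrimitiveRoot.of_map_of_injective (f := ℚ⟮ζ⟯.val) hζ (ℚ⟮ζ⟯.val).injective
  have hθ : algebraMap ℚ⟮ζ - ζ⁻¹⟯ ℚ⟮ζ⟯ θ = z - z⁻¹ := by
    apply Subtype.ext; rfl
  have hinv : IsIntegral ℚ ζ⁻¹ := hζ.inv.isIntegral (by positivity) |>.tower_top
  have hgen : Algebra.adjoin ℚ {θ} = ⊤ := by
    have h := (IntermediateField.adjoin.powerBasis (hint.sub hinv)).adjoin_gen_eq_top
    rwa [IntermediateField.adjoin.powerBasis_gen] at h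
  have hD := aux_discr hz hθ hgen
  have hD' : |(NumberField.discr ℚ⟮ζ - ζ⁻¹⟯ : ℝ)| = (2 ^ (s + 2)) ^ (2 ^ (s + 1)) / 2 := by
    have := congrArg (fun q : ℚ => (q : ℝ)) hD
    push_cast at this
    exact this
  obtain ⟨h1, h2⟩ := aux_rhs hD' rfl
  exact aux_min hz hθ hgen h1 h2
end

section
/- Let r ≥ 3, let ζ be a primitive 2^r-th root of unity, and let K = ℚ(ζ − ζ^{-1}), of degree n = 2^{r−2} over ℚ, with D_K the absolute value of its discriminant. Then M(K) ≤ √2 · e^{-1/4} · 2^{-n} · √(D_K). -/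
open NumberField IntermediateField

def lucE {R : Type*} [CommRing R] (a : R) : ℕ → R
  | 0 => 2
  | 1 => a
  | (k+2) => a * lucE a (k+1) + lucE a k

theorem lucE_closed {R : Type*} [CommRing R] (u v : R) (h : u * v = -1) (k : ℕ) :
    lucE (u + v) k = u ^ k + v ^ k := by
  induction k using Nat.twoStepInduction with
  | zero => simp [lucE]; norm_num
  | one => simp [lucE]
  | more k h1 h2 =>
    rw [lucE, h1, h2]
    linear_combination (u^k + v^k) * h

theorem lucE_map {R S : Type*} [CommRing R] [CommRing S] (f : R →+* S) (a : R) (k : ℕ) :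
    f (lucE a k) = lucE (f a) k := by
  induction k using Nat.twoStepInduction with
  | zero => exact map_ofNat f 2
  | one => simp [lucE]
  | more k h1 h2 => simp [lucE, h1, h2]

theorem lucE_mul' {R : Type*} [CommRing R] (a : R) (j d : ℕ) :
    lucE a (j + d) * lucE a j = lucE a (2 * j + d) + (-1) ^ j * lucE a d := by
  induction j using Nat.twoStepInduction generalizing d with
  | zero => simp [lucE]; ring
  | one =>
    rw [show 1 + d = d + 1 by ring, show 2 * 1 + d = d + 2 by ring]
    simp [lucE]; ring
  | more k h1 h2 =>
    have e1 := h2 (d + 1)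
    have e2 := h1 (d + 2)
    rw [show k + 2 + d = k + (d + 2) by ring]
    rw [show k + 1 + (d + 1) = k + (d + 2) by ring, show 2 * (k + 1) + (d + 1) = 2 * k + d + 3 by ring] at e1
    rw [show 2 * k + (d + 2) = 2 * k + d + 2 by ring] at e2
    rw [show 2 * (k + 2) + d = 2 * k + d + 4 by ring]
    simp only [lucE] at e1 e2 ⊢
    linear_combination a * e1 + e2

def lucB {R : Type*} [CommRing R] (a : R) (k : ℕ) : R := if k = 0 then 1 else lucE a k

section
variable {K F : Type*} [Field K] [NumberField K] [Field F] [CharZero F] [Algebra K F]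
  [FiniteDimensional ℚ F]

set_option linter.unusedSectionVars false

theorem tr_zeta_pow (n : ℕ) (ζ : F) (B : Module.Basis (Fin (2*n)) ℚ F)
    (hB : ∀ i, B i = ζ ^ (i : ℕ)) (h1 : ζ ^ (2*n) = -1) (k : ℕ) (hk : 0 < k) (hk' : k < 2*n) :
    Algebra.trace ℚ F (ζ ^ k) = 0 := by
  rw [Algebra.trace_eq_matrix_trace B, Matrix.trace]
  refine Finset.sum_eq_zero fun i _ => ?_
  rw [Matrix.diag_apply, Algebra.leftMulMatrix_eq_repr_mul, hB, ← pow_add]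
  by_cases h : k + i < 2 * n
  · have := hB ⟨k + i, h⟩
    simp only at this
    rw [← this, B.repr_self, Finsupp.single_apply, if_neg]
    simp [Fin.ext_iff]; omega
  · have := hB ⟨k + i - 2 * n, by omega⟩
    simp only at this
    rw [show k + i = (k + i - 2 * n) + 2 * n by omega, pow_add, h1, ← this, mul_neg_one, map_neg,
      Finsupp.neg_apply, B.repr_self, Finsupp.single_apply, if_neg, neg_zero]
    simp [Fin.ext_iff]; omega

theorem inv_pow_eq (n : ℕ) (ζ : F) (h1 : ζ ^ (2*n) = -1) (k : ℕ) (hk : k ≤ 2 * n) (hz : ζ ≠ 0) :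
    (-ζ⁻¹) ^ k = (-1) ^ (k + 1) * ζ ^ (2 * n - k) := by
  have : ζ ^ (2 * n - k) * ζ ^ k = -1 := by rw [← pow_add, Nat.sub_add_cancel hk, h1]
  rw [neg_pow, inv_pow]
  field_simp
  rw [mul_comm, pow_succ, ]
  linear_combination ((-1)^k) * this

theorem map_lucE (α : K) (ζ : F) (hz : ζ ≠ 0) (hα : algebraMap K F α = ζ - ζ⁻¹) (k : ℕ) :
    algebraMap K F (lucE α k) = ζ ^ k + (-ζ⁻¹) ^ k := by
  rw [lucE_map, hα, sub_eq_add_neg, lucE_closed]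
  field_simp

theorem tr_lucE (n : ℕ) (ζ : F) (B : Module.Basis (Fin (2*n)) ℚ F)
    (hB : ∀ i, B i = ζ ^ (i : ℕ)) (h1 : ζ ^ (2*n) = -1) (hz : ζ ≠ 0) (α : K)
    (hα : algebraMap K F α = ζ - ζ⁻¹) (k : ℕ) (hk : 0 < k) (hk' : k < 2*n) :
    Algebra.trace ℚ K (lucE α k) = 0 := by
  have hfd : FiniteDimensional K F := FiniteDimensional.right ℚ K F
  have e : Algebra.trace ℚ F (algebraMap K F (lucE α k)) = 0 := by
    rw [map_lucE α ζ hz hα, inv_pow_eq n ζ h1 k hk'.le hz, map_add,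
      tr_zeta_pow n ζ B hB h1 k hk hk']
    rcases neg_one_pow_eq_or F (k+1) with h | h <;> rw [h] <;> simp only [one_mul, neg_one_mul, map_neg]
    <;> rw [tr_zeta_pow n ζ B hB h1 _ (by omega) (by omega)] <;> simp
  rw [← Algebra.trace_trace (S := K), Algebra.trace_algebraMap, map_nsmul] at e
  exact (smul_eq_zero.1 e).resolve_left (Module.finrank_pos (R := K) (M := F)).ne'

theorem tr_lucB (n : ℕ) (α : K) (hT : ∀ k, 0 < k → k < 2 * n → Algebra.trace ℚ K (lucE α k) = 0)
    (i j : ℕ) (hi : i < n) (hj : j < n) :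
    Algebra.trace ℚ K (lucB α i * lucB α j) =
      if i = j then (-1) ^ j * (if j = 0 then 1 else 2) * (Module.finrank ℚ K : ℚ) else 0 := by
  wlog h : j ≤ i generalizing i j
  · rw [mul_comm, this j i hj hi (by omega), if_neg (by omega), if_neg (by omega)]
  obtain ⟨d, rfl⟩ := Nat.exists_eq_add_of_le h
  have t1 : Algebra.trace ℚ K 1 = (Module.finrank ℚ K : ℚ) := by
    simpa using Algebra.trace_algebraMap (R := ℚ) (S := K) 1
  rcases Nat.eq_zero_or_pos j with rfl | hj0
  · rcases Nat.eq_zero_or_pos d with rfl | hd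
    · simpa [lucB] using t1
    · simp [lucB, hd.ne', hT d hd (by omega)]
  · have : Algebra.trace ℚ K ((-1) ^ j * lucE α d) = (-1) ^ j * Algebra.trace ℚ K (lucE α d) := by
      rcases neg_one_pow_eq_or K j with h | h <;> rcases neg_one_pow_eq_or ℚ j with h' | h'
      · simp [h, h']
      · exfalso
        have := congrArg (algebraMap ℚ K) h'
        simp [h] at this; norm_num at this
      · exfalso
        have := congrArg (algebraMap ℚ K) h'
        simp [h] at this; norm_num at this
      · simp [h, h']
    simp only [lucB, hj0.ne', if_false, show j + d ≠ 0 by omega]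
    rw [lucE_mul', map_add, hT _ (by omega) (by omega), this]
    rcases Nat.eq_zero_or_pos d with rfl | hd
    · have : (lucE α 0) = (2:ℚ) • (1:K) := by simp [lucE, Algebra.smul_def]
      rw [this, map_smul, t1]; simp; ring
    · rw [hT d hd (by omega)]; simp [hd.ne']

theorem span_lucB (n : ℕ) (hn : 2 ≤ n) (α : K) (hE : lucE α n = 0)
    (htop : Algebra.adjoin ℚ {α} = ⊤) :
    ⊤ ≤ Submodule.span ℚ (Set.range fun i : Fin n => lucB α i) := by
  set S := Submodule.span ℚ (Set.range fun i : Fin n => lucB α i) with hS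
  have hb : ∀ i, i < n → lucB α i ∈ S := fun i hi => Submodule.subset_span ⟨⟨i, hi⟩, rfl⟩
  have hE' : ∀ i, i ≤ n → lucE α i ∈ S := by
    intro i hi
    rcases Nat.eq_zero_or_pos i with rfl | h0
    · have : (lucE α 0) = (2:ℚ) • (lucB α 0) := by simp [lucE, lucB, Algebra.smul_def]
      rw [this]; exact S.smul_mem _ (hb 0 (by omega))
    · rcases hi.lt_or_eq with h | rfl
      · have := hb i h
        rwa [lucB, if_neg h0.ne'] at this
      · rw [hE]; exact S.zero_mem
  have hmul : ∀ x ∈ S, α * x ∈ S := by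
    intro x hx
    induction hx using Submodule.span_induction with
    | mem x hx =>
      obtain ⟨i, rfl⟩ := hx
      obtain ⟨i, hi⟩ := i
      rcases i with _ | i
      · simpa [lucB, lucE] using hb 1 (by omega)
      · simp only [lucB, Nat.succ_ne_zero, if_false]
        have : α * lucE α (i+1) = lucE α (i+2) - lucE α i := by simp [lucE]
        rw [this]
        exact S.sub_mem (hE' _ (by omega)) (hE' _ (by omega))
    | zero => simp
    | add x y _ _ h1 h2 => rw [mul_add]; exact S.add_mem h1 h2
    | smul c x _ h => rw [mul_smul_comm]; exact S.smul_mem _ h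
  have hp : ∀ k : ℕ, α ^ k ∈ S := by
    intro k
    induction k with
    | zero => simpa [lucB] using hb 0 (by omega)
    | succ k ih => rw [pow_succ']; exact hmul _ ih
  intro x _
  have hx : x ∈ Algebra.adjoin ℚ {α} := by rw [htop]; trivial
  rw [Algebra.adjoin_singleton_eq_range_aeval] at hx
  obtain ⟨p, rfl⟩ := hx
  simp only [AlgHom.toRingHom_eq_coe, RingHom.coe_coe, Polynomial.aeval_eq_sum_range]
  exact S.sum_mem fun i _ => S.smul_mem _ (hp i)

theorem li_lucB (n : ℕ) (α : K)
    (hT : ∀ k, 0 < k → k < 2 * n → Algebra.trace ℚ K (lucE α k) = 0) :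
    LinearIndependent ℚ (fun i : Fin n => lucB α i) := by
  rw [Fintype.linearIndependent_iff]
  intro g hg i
  have := congrArg (fun x => Algebra.trace ℚ K (x * lucB α i)) hg
  simp only [Finset.sum_mul, map_sum, smul_mul_assoc, map_smul, zero_mul, map_zero] at this
  rw [Finset.sum_eq_single i] at this
  · rw [tr_lucB n α hT i i i.2 i.2, if_pos rfl, smul_eq_mul] at this
    refine (mul_eq_zero.1 this).resolve_right ?_
    have : (Module.finrank ℚ K : ℚ) ≠ 0 := by exact_mod_cast (Module.finrank_pos (R := ℚ) (M := K)).ne'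
    refine mul_ne_zero (mul_ne_zero (by simp) ?_) this
    split_ifs <;> norm_num
  · intro j _ hj
    rw [tr_lucB n α hT j i j.2 i.2, if_neg (fun h => hj (Fin.ext h)), smul_zero]
  · simp


theorem lucB_coord (n : ℕ) (ζ : F) (B : Module.Basis (Fin (2*n)) ℚ F)
    (hB : ∀ i, B i = ζ ^ (i : ℕ)) (h1 : ζ ^ (2*n) = -1) (hz : ζ ≠ 0) (α : K)
    (hα : algebraMap K F α = ζ - ζ⁻¹) (i j : Fin n) :
    B.repr (algebraMap K F (lucB α j)) ⟨i, by omega⟩ = if j = i then 1 else 0 := by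
  have hr : ∀ k, (hk : k < 2 * n) → B.repr (ζ ^ k) ⟨i, by omega⟩ = if k = i then 1 else 0 := by
    intro k hk
    have := hB ⟨k, hk⟩
    simp only at this
    rw [← this, B.repr_self, Finsupp.single_apply]
    simp [Fin.ext_iff]
  obtain ⟨j, hj⟩ := j
  rcases Nat.eq_zero_or_pos j with rfl | h0
  · have := hr 0 (by omega)
    simpa [lucB, Fin.ext_iff] using this
  · simp only [lucB, h0.ne', if_false]
    rw [map_lucE α ζ hz hα, inv_pow_eq n ζ h1 j (by omega) hz, map_add, Finsupp.add_apply,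
      hr j (by omega)]
    have e := hr (2 * n - j) (by omega)
    rw [if_neg (by omega)] at e
    rcases neg_one_pow_eq_or F (j+1) with h | h <;> rw [h] <;>
      simp only [one_mul, neg_one_mul, map_neg, Finsupp.neg_apply, e] <;> simp [Fin.ext_iff]

theorem adjoin_coord (n : ℕ) (hn : 0 < n) (ζ : F) (B : Module.Basis (Fin (2*n)) ℚ F)
    (hB : ∀ i, B i = ζ ^ (i : ℕ)) (h1 : ζ ^ (2*n) = -1) (y : F)
    (hy : y ∈ Algebra.adjoin ℤ {ζ}) (i : Fin (2*n)) : ∃ m : ℤ, B.repr y i = m := by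
  rw [Algebra.adjoin_singleton_eq_range_aeval] at hy
  obtain ⟨p, rfl⟩ := hy
  simp only [AlgHom.toRingHom_eq_coe, RingHom.coe_coe, Polynomial.aeval_eq_sum_range]
  have hp : ∀ k : ℕ, ∃ m : ℤ, B.repr (ζ ^ k) i = m := by
    intro k
    rw [← Nat.mod_add_div k (2 * n), pow_add, pow_mul, h1]
    have := hB ⟨k % (2 * n), Nat.mod_lt _ (by omega)⟩
    simp only at this
    rw [← this]
    rcases neg_one_pow_eq_or F (k / (2 * n)) with h | h <;> rw [h] <;>
      simp only [mul_one, mul_neg_one, map_neg, Finsupp.neg_apply, B.repr_self, Finsupp.single_apply]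
    · exact ⟨if _ then 1 else 0, by push_cast; rfl⟩
    · exact ⟨-if _ then 1 else 0, by push_cast; rfl⟩
  choose m hm using hp
  refine ⟨∑ k ∈ Finset.range (p.natDegree + 1), p.coeff k * m k, ?_⟩
  rw [map_sum, Finsupp.finsetSum_apply]
  push_cast
  refine Finset.sum_congr rfl fun k _ => ?_
  rw [← hm, map_zsmul, Finsupp.smul_apply, zsmul_eq_mul]

theorem bas_int (n : ℕ) (hn : 0 < n) (ζ : F) (B : Module.Basis (Fin (2*n)) ℚ F)
    (hB : ∀ i, B i = ζ ^ (i : ℕ)) (h1 : ζ ^ (2*n) = -1) (hz : ζ ≠ 0) (α : K)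
    (hα : algebraMap K F α = ζ - ζ⁻¹)
    (hint : ∀ y : F, IsIntegral ℤ y → y ∈ Algebra.adjoin ℤ {ζ})
    (b : Module.Basis (Fin n) ℚ K) (hb : ∀ i, b i = lucB α i) (x : K) (hx : IsIntegral ℤ x)
    (i : Fin n) : ∃ m : ℤ, b.repr x i = m := by
  obtain ⟨m, hm⟩ := adjoin_coord n hn ζ B hB h1 _ (hint _ (hx.map (IsScalarTower.toAlgHom ℤ K F))) ⟨i, by omega⟩
  refine ⟨m, ?_⟩
  rw [← hm]
  conv_rhs => rw [← b.sum_repr x]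
  simp only [IsScalarTower.coe_toAlgHom', map_sum, Finsupp.finsetSum_apply, hb]
  rw [Finset.sum_eq_single i]
  · rw [Algebra.smul_def, map_mul, ← IsScalarTower.algebraMap_apply, ← Algebra.smul_def, map_smul,
      Finsupp.smul_apply, lucB_coord n ζ B hB h1 hz α hα]; simp
  · intro j _ hj
    rw [Algebra.smul_def, map_mul, ← IsScalarTower.algebraMap_apply, ← Algebra.smul_def, map_smul,
      Finsupp.smul_apply, lucB_coord n ζ B hB h1 hz α hα, if_neg hj, smul_zero]
  · simp

theorem lucE_int (α : K) (hα : IsIntegral ℤ α) (k : ℕ) : IsIntegral ℤ (lucE α k) := by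
  induction k using Nat.twoStepInduction with
  | zero => have h := isIntegral_algebraMap (R := ℤ) (A := K) (x := 2)
            rw [map_ofNat] at h
            exact h
  | one => exact hα
  | more k h1 h2 => exact (hα.mul h2).add h1

theorem lucB_int (α : K) (hα : IsIntegral ℤ α) (k : ℕ) : IsIntegral ℤ (lucB α k) := by
  unfold lucB
  split_ifs
  · exact isIntegral_one
  · exact lucE_int α hα k

theorem discr_K (n : ℕ) (hn : 0 < n) (α : K) (hαi : IsIntegral ℤ α)
    (b : Module.Basis (Fin n) ℚ K) (hb : ∀ i, b i = lucB α i)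
    (hT : ∀ k, 0 < k → k < 2 * n → Algebra.trace ℚ K (lucE α k) = 0)
    (hbi : ∀ x : K, IsIntegral ℤ x → ∀ i, ∃ m : ℤ, b.repr x i = m) :
    |(discr K : ℝ)| = 2 ^ (n - 1) * (n : ℝ) ^ n := by
  have e : (discr K : ℚ) = Algebra.discr ℚ b := by
    rw [coe_discr]
    refine Algebra.discr_eq_discr_of_toMatrix_coeff_isIntegral K ?_ ?_
    · intro i j
      rw [Module.Basis.toMatrix_apply]
      have hbj : IsIntegral ℤ (b j) := by rw [hb]; exact lucB_int α hαi _
      obtain ⟨y, hy⟩ : ∃ y : 𝓞 K, algebraMap (𝓞 K) K y = b j := ⟨⟨b j, hbj⟩, rfl⟩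
      rw [← hy, integralBasis_repr_apply]
      exact isIntegral_algebraMap
    · intro i j
      rw [Module.Basis.toMatrix_apply]
      obtain ⟨m, hm⟩ := hbi (integralBasis K j) (by rw [integralBasis_apply]; exact RingOfIntegers.isIntegral_coe _) i
      rw [hm]
      exact isIntegral_algebraMap (R := ℤ) (x := m)
  have hf : Module.finrank ℚ K = n := by simpa using Module.finrank_eq_card_basis b
  have hm : Algebra.traceMatrix ℚ b = Matrix.diagonal fun j : Fin n =>
      (-1 : ℚ) ^ (j : ℕ) * (if (j : ℕ) = 0 then 1 else 2) * n := by
    ext i j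
    rw [Algebra.traceMatrix_apply, Algebra.traceForm_apply, hb, hb, tr_lucB n α hT i j i.2 j.2,
      Matrix.diagonal_apply, hf]
    simp only [Fin.ext_iff]
    by_cases h : (i : ℕ) = j <;> simp [h]
  rw [Algebra.discr_def, hm, Matrix.det_diagonal] at e
  have e2 : |(discr K : ℚ)| = 2 ^ (n - 1) * (n : ℚ) ^ n := by
    rw [e, Finset.abs_prod]
    simp only [abs_mul, abs_pow, abs_neg, abs_one, one_pow, one_mul, Nat.abs_cast]
    rw [Finset.prod_mul_distrib, Finset.prod_const, Finset.card_fin]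
    congr 1
    obtain ⟨k, rfl⟩ := Nat.exists_eq_add_of_le' hn
    rw [Fin.prod_univ_succ]
    simp
  have := congrArg (fun q : ℚ => (q : ℝ)) e2
  push_cast at this
  exact this

theorem conj_lucE (n : ℕ) (hn : 0 < n) (a : ℂ) (h : lucE a (2 * n) = -2) (k : ℕ) :
    (starRingEnd ℂ) (lucE a k) = (-1) ^ k * lucE a k := by
  obtain ⟨s, hs⟩ := IsAlgClosed.exists_pow_nat_eq (a ^ 2 + 4) (n := 2) (by norm_num)
  obtain ⟨u, v, huv, rfl⟩ : ∃ u v : ℂ, u * v = -1 ∧ a = u + v :=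
    ⟨(a + s) / 2, (a - s) / 2, by linear_combination (-1/4) * hs, by ring⟩
  rw [lucE_closed u v huv] at h ⊢
  have hp : u ^ (2 * n) * v ^ (2 * n) = 1 := by rw [← mul_pow, huv, pow_mul]; simp
  have ht : (u ^ (2 * n) + 1) ^ 2 = 0 := by linear_combination u ^ (2 * n) * h - hp
  have ht' : u ^ (2 * n) = -1 := by
    have := pow_eq_zero_iff (two_ne_zero) |>.1 ht
    linear_combination this
  have hnorm : ‖u‖ = 1 := by
    have := congrArg norm ht'
    rw [norm_pow, norm_neg, norm_one] at this
    exact (pow_eq_one_iff_of_nonneg (norm_nonneg _) (by omega)).1 this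
  have hcu : (starRingEnd ℂ) u * u = 1 := by
    rw [mul_comm, Complex.mul_conj, Complex.normSq_eq_norm_sq, hnorm]; simp
  have h1 : (starRingEnd ℂ) u = -v := by
    linear_combination ((starRingEnd ℂ) u) * huv - v * hcu
  have h2 : (starRingEnd ℂ) v = -u := by
    rw [← neg_eq_iff_eq_neg, ← map_neg, ← h1, Complex.conj_conj]
  rw [map_add, map_pow, map_pow, h1, h2, neg_pow, neg_pow u]; ring

theorem conj_lucB (n : ℕ) (hn : 0 < n) (a : ℂ) (h : lucE a (2 * n) = -2) (k : ℕ) :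
    (starRingEnd ℂ) (lucB a k) = (-1) ^ k * lucB a k := by
  unfold lucB
  split_ifs with h0
  · simp [h0]
  · exact conj_lucE n hn a h k

theorem lucB_map {R S : Type*} [CommRing R] [CommRing S] (f : R →+* S) (a : R) (k : ℕ) :
    f (lucB a k) = lucB (f a) k := by
  unfold lucB
  split_ifs
  · simp
  · exact lucE_map f a k

theorem sum_sq (n : ℕ) (hn : 0 < n) (α : K) (h : lucE α (2 * n) = -2)
    (b : Module.Basis (Fin n) ℚ K) (hb : ∀ i, b i = lucB α i)
    (hT : ∀ k, 0 < k → k < 2 * n → Algebra.trace ℚ K (lucE α k) = 0) (x : K) :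
    ∑ φ : K →ₐ[ℚ] ℂ, ‖φ x‖ ^ 2 =
      n * ∑ j : Fin n, (if (j : ℕ) = 0 then 1 else 2) * ((b.repr x j : ℚ) : ℝ) ^ 2 := by
  have hf : Module.finrank ℚ K = n := by simpa using Module.finrank_eq_card_basis b
  have key : ∀ φ : K →ₐ[ℚ] ℂ, ((‖φ x‖ ^ 2 : ℝ) : ℂ) =
      φ (x * ∑ j, (b.repr x j * (-1) ^ (j : ℕ)) • b j) := by
    intro φ
    push_cast
    rw [← Complex.mul_conj', map_mul]
    congr 1
    conv_lhs => rw [← b.sum_repr x]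
    simp only [map_sum, map_smul]
    refine Finset.sum_congr rfl fun j _ => ?_
    have h3 : φ (b j) = lucB (φ α) j := by rw [hb]; exact lucB_map φ.toRingHom α j
    have h4 : lucE (φ α) (2 * n) = -2 := by
      have := lucE_map φ.toRingHom α (2 * n)
      rw [h] at this
      rw [map_neg, map_ofNat] at this
      exact this.symm
    rw [Algebra.smul_def, Algebra.smul_def, map_mul, map_mul, map_mul, h3, conj_lucB n hn _ h4]
    simp
    ring
  have e : ((∑ φ : K →ₐ[ℚ] ℂ, ‖φ x‖ ^ 2 : ℝ) : ℂ) =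
      algebraMap ℚ ℂ (Algebra.trace ℚ K (x * ∑ j, (b.repr x j * (-1) ^ (j : ℕ)) • b j)) := by
    rw [trace_eq_sum_embeddings ℂ, Complex.ofReal_sum]
    exact Finset.sum_congr rfl fun φ _ => key φ
  have t : Algebra.trace ℚ K (x * ∑ j, (b.repr x j * (-1) ^ (j : ℕ)) • b j) =
      n * ∑ j : Fin n, (if (j : ℕ) = 0 then 1 else 2) * (b.repr x j) ^ 2 := by
    conv_lhs => enter [2, 1]; rw [← b.sum_repr x]
    rw [Finset.sum_mul_sum, map_sum, Finset.mul_sum]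
    refine Finset.sum_congr rfl fun i _ => ?_
    rw [map_sum, Finset.sum_eq_single i]
    · rw [smul_mul_smul_comm, map_smul, hb, tr_lucB n α hT i i i.2 i.2, hf, if_pos rfl, smul_eq_mul]
      have : ((-1 : ℚ) ^ (i : ℕ)) * (-1) ^ (i : ℕ) = 1 := by rw [← mul_pow]; simp
      linear_combination (b.repr x i) ^ 2 * (if (i : ℕ) = 0 then 1 else 2) * n * this
    · intro j _ hj
      rw [smul_mul_smul_comm, map_smul, hb, hb, tr_lucB n α hT i j i.2 j.2,
        if_neg (fun h => hj (Fin.ext h.symm)), smul_zero]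
    · simp
  rw [t] at e
  apply Complex.ofReal_injective
  rw [e]
  simp only [eq_ratCast]
  push_cast
  congr 1
  refine Finset.sum_congr rfl fun j _ => ?_
  split_ifs <;> simp

theorem amgm {ι : Type*} [Fintype ι] (n : ℕ) (hn : 0 < n) (hc : Fintype.card ι = n) (z : ι → ℝ)
    (hz : ∀ i, 0 ≤ z i) : ∏ i, z i ≤ ((∑ i, z i) / n) ^ n := by
  have hn' : (n : ℝ) ≠ 0 := by positivity
  have := Real.geom_mean_le_arith_mean_weighted Finset.univ (fun _ => (n : ℝ)⁻¹) z
    (fun _ _ => by positivity) (by simp [hc, hn']) (fun i _ => hz i)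
  have h2 := pow_le_pow_left₀ (Finset.prod_nonneg fun i _ => Real.rpow_nonneg (hz i) _) this n
  rw [← Finset.prod_pow, ← Finset.mul_sum] at h2
  calc _ = ∏ i, (z i ^ (n : ℝ)⁻¹) ^ n := Finset.prod_congr rfl fun i _ => by
        rw [Real.rpow_inv_natCast_pow (hz i) hn.ne']
    _ ≤ _ := h2
    _ = _ := by rw [div_eq_inv_mul]

theorem numeric (n : ℕ) (hn : 0 < n) (D N : ℝ) (hD : D = 2 ^ (n - 1) * (n : ℝ) ^ n)
    (hN : N ^ 2 ≤ ((2 * n - 1) / 4) ^ n) :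
    N ≤ Real.sqrt 2 * Real.exp (-(1 / 4)) * (2 : ℝ)⁻¹ ^ n * Real.sqrt D := by
  have hn' : (0 : ℝ) < n := by positivity
  refine le_of_sq_le_sq ?_ (by positivity)
  rw [mul_pow, mul_pow, mul_pow, Real.sq_sqrt (by norm_num), Real.sq_sqrt (by rw [hD]; positivity), hD,
    ← Real.exp_nat_mul]
  refine hN.trans ?_
  have h1 : (1 - 1 / (2 * n : ℝ)) ^ n ≤ Real.exp (-(1/2)) := by
    have h := Real.add_one_le_exp (-(1 / (2 * n : ℝ)))
    have h0 : (0 : ℝ) ≤ 1 - 1 / (2 * n : ℝ) := by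
      rw [sub_nonneg, div_le_one (by positivity)]
      have : (1 : ℝ) ≤ n := by exact_mod_cast hn
      linarith
    calc _ ≤ (Real.exp (-(1 / (2 * n : ℝ)))) ^ n := pow_le_pow_left₀ h0 (by linarith) n
      _ = _ := by rw [← Real.exp_nat_mul]; congr 1; field_simp
  have h2 : ((2 * n - 1 : ℝ) / 4) ^ n = (1 - 1 / (2 * n : ℝ)) ^ n * (n / 2) ^ n := by
    rw [← mul_pow]; congr 1; field_simp; ring
  have h3 : (2 : ℝ) * Real.exp (((2:ℕ):ℝ) * -(1 / 4)) * ((2:ℝ)⁻¹ ^ n) ^ 2 * (2 ^ (n - 1) * (n : ℝ) ^ n) =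
      Real.exp (-(1/2)) * (n / 2) ^ n := by
    obtain ⟨k, rfl⟩ := Nat.exists_eq_add_of_le' hn
    rw [show ((2:ℕ):ℝ) * -(1 / 4) = -(1/2) by norm_num, div_pow, Nat.add_sub_cancel, inv_pow]
    field_simp
    exact (pow_succ' 2 k).symm
  rw [h2, h3]
  exact mul_le_mul_of_nonneg_right h1 (by positivity)

end

theorem main_general {K F : Type*} [Field K] [NumberField K] [Field F] [CharZero F] [Algebra K F]
    [FiniteDimensional ℚ F] (n : ℕ) (hn : 2 ≤ n) (hev : Even n) (ζ : F)
    (B : Module.Basis (Fin (2*n)) ℚ F)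
    (hB : ∀ i, B i = ζ ^ (i : ℕ)) (h1 : ζ ^ (2*n) = -1) (hz : ζ ≠ 0) (α : K)
    (hα : algebraMap K F α = ζ - ζ⁻¹) (hαi : IsIntegral ℤ α)
    (htop : Algebra.adjoin ℚ {α} = ⊤)
    (hint : ∀ y : F, IsIntegral ℤ y → y ∈ Algebra.adjoin ℤ {ζ}) :
    euclideanMinimum K ≤
      Real.sqrt 2 * Real.exp (-(1 / 4)) * (2 : ℝ)⁻¹ ^ n * Real.sqrt |(NumberField.discr K : ℝ)| := by
  have hn0 : 0 < n := by omega
  have hT := tr_lucE n ζ B hB h1 hz α hα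
  have hinj := (algebraMap K F).injective
  have hE : lucE α n = 0 := by
    apply hinj
    rw [map_lucE α ζ hz hα, inv_pow_eq n ζ h1 n (by omega) hz, map_zero, pow_succ, hev.neg_one_pow,
      show 2 * n - n = n by omega]
    ring
  have hE2 : lucE α (2 * n) = -2 := by
    apply hinj
    rw [map_lucE α ζ hz hα, inv_pow_eq n ζ h1 (2 * n) le_rfl hz, h1, pow_succ, pow_mul, map_neg, map_ofNat]
    simp
    norm_num
  let b : Module.Basis (Fin n) ℚ K := Module.Basis.mk (li_lucB n α hT) (span_lucB n hn α hE htop)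
  have hb : ∀ i, b i = lucB α i := fun i => by simp [b]
  have hbi := bas_int n hn0 ζ B hB h1 hz α hα hint b hb
  have hf : Module.finrank ℚ K = n := by simpa using Module.finrank_eq_card_basis b
  refine ciSup_le fun x => ?_
  let c : K := ∑ j, (round (b.repr x j) : ℤ) • b j
  have hc : IsIntegral ℤ c := IsIntegral.sum _ fun j _ => by
    rw [hb, zsmul_eq_mul]
    exact (isIntegral_algebraMap (R := ℤ) (x := round (b.repr x j))).mul (lucB_int α hαi _)
  refine (ciInf_le ⟨0, by rintro _ ⟨y, rfl⟩; positivity⟩ (⟨c, hc⟩ : 𝓞 K)).trans ?_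
  refine numeric n hn0 _ _ (discr_K n hn0 α hαi b hb hT hbi) ?_
  change |((Algebra.norm ℚ (x - c) : ℚ) : ℝ)| ^ 2 ≤ _
  have hN : |((Algebra.norm ℚ (x - c) : ℚ) : ℝ)| ^ 2 = ∏ φ : K →ₐ[ℚ] ℂ, ‖φ (x - c)‖ ^ 2 := by
    have := congrArg norm (Algebra.norm_eq_prod_embeddings ℚ ℂ (x - c))
    rw [norm_prod, eq_ratCast, Complex.norm_ratCast] at this
    rw [this, Finset.prod_pow]
  rw [hN]
  refine (amgm n hn0 ?_ _ fun φ => by positivity).trans ?_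
  · rw [← hf]; exact AlgHom.card ℚ K ℂ
  · refine pow_le_pow_left₀ (by positivity) ?_ n
    rw [sum_sq n hn0 α hE2 b hb hT, mul_div_cancel_left₀ _ (by positivity)]
    have hrep : ∀ j, b.repr (x - c) j = b.repr x j - round (b.repr x j) := by
      intro j
      rw [map_sub, Finsupp.sub_apply]
      congr 1
      simp only [c, map_sum, Finsupp.finsetSum_apply, map_zsmul, b.repr_self, Finsupp.smul_apply,
        Finsupp.single_apply]
      simp
    have hsq : ∀ j, ((b.repr (x - c) j : ℚ) : ℝ) ^ 2 ≤ 1 / 4 := by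
      intro j
      have := abs_sub_round (b.repr x j)
      rw [← hrep] at this
      have h' : |((b.repr (x - c) j : ℚ) : ℝ)| ≤ 1 / 2 := by
        have h2 : ((|b.repr (x - c) j| : ℚ) : ℝ) ≤ ((1 / 2 : ℚ) : ℝ) := by exact_mod_cast this
        push_cast at h2
        exact h2
      rw [← sq_abs]
      nlinarith [abs_nonneg ((b.repr (x - c) j : ℚ) : ℝ)]
    calc _ ≤ ∑ j : Fin n, (if (j : ℕ) = 0 then (1:ℝ) else 2) * (1 / 4) := by
          refine Finset.sum_le_sum fun j _ => mul_le_mul_of_nonneg_left (hsq j) ?_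
          split_ifs <;> norm_num
      _ = _ := by
          obtain ⟨k, rfl⟩ := Nat.exists_eq_add_of_le' hn0
          rw [Fin.sum_univ_succ]
          simp
          ring

theorem euclideanMinimum_adjoin_zeta_sub_zeta_inv_le'
    (r : ℕ) (hr : 3 ≤ r) (ζ : ℂ) (hζ : IsPrimitiveRoot ζ (2 ^ r))
    [NumberField ℚ⟮ζ - ζ⁻¹⟯] :
    euclideanMinimum ℚ⟮ζ - ζ⁻¹⟯ ≤
      Real.sqrt 2 * Real.exp (-(1 / 4)) * (2 : ℝ)⁻¹ ^ (2 ^ (r - 2)) *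
        Real.sqrt |(NumberField.discr ℚ⟮ζ - ζ⁻¹⟯ : ℝ)| := by
  have hpos : 0 < 2 ^ r := by positivity
  have hint : IsIntegral ℤ ζ := hζ.isIntegral hpos
  have hint' : IsIntegral ℤ ζ⁻¹ := hζ.inv.isIntegral hpos
  have h2n : 2 * 2 ^ (r - 2) = 2 ^ (r - 1) := by
    rw [← pow_succ']; congr 1; omega
  have h4n : 2 ^ (r - 1) * 2 = 2 ^ r := by
    rw [← pow_succ]; congr 1; omega
  have hz : ζ ≠ 0 := hζ.ne_zero hpos.ne'
  have hm1 : ζ ^ (2 * 2 ^ (r - 2)) = -1 := by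
    rw [h2n]
    exact (hζ.pow hpos h4n.symm).eq_neg_one_of_two_right
  have hle : ℚ⟮ζ - ζ⁻¹⟯ ≤ ℚ⟮ζ⟯ := by
    rw [adjoin_simple_le_iff]
    exact sub_mem (mem_adjoin_simple_self ℚ ζ) (inv_mem (mem_adjoin_simple_self ℚ ζ))
  let : Algebra ℚ⟮ζ - ζ⁻¹⟯ ℚ⟮ζ⟯ := (IntermediateField.inclusion hle).toRingHom.toAlgebra
  have hQ : IsIntegral ℚ ζ := hint.tower_top
  have hfd : FiniteDimensional ℚ ℚ⟮ζ⟯ := adjoin.finiteDimensional hQ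
  let pb := adjoin.powerBasis hQ
  have hdim : pb.dim = 2 * 2 ^ (r - 2) := by
    change (minpoly ℚ ζ).natDegree = _
    rw [← Polynomial.cyclotomic_eq_minpoly_rat hζ hpos, Polynomial.natDegree_cyclotomic,
      Nat.totient_prime_pow Nat.prime_two (by omega), h2n]
    simp
  have hg : IsPrimitiveRoot (AdjoinSimple.gen ℚ ζ) (2 ^ r) :=
    IsPrimitiveRoot.coe_submonoidClass_iff.mp hζ
  have hcyc : IsCyclotomicExtension {2 ^ r} ℚ ℚ⟮ζ⟯ := by
    have : NeZero (2 ^ r) := ⟨hpos.ne'⟩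
    have h := (IntermediateField.isCyclotomicExtension_singleton_iff_eq_adjoin (2 ^ r) ℚ ℂ ℚ⟮ζ⟯ hζ).2 rfl
    exact h
  have : Fact (Nat.Prime 2) := ⟨Nat.prime_two⟩
  have hic := IsCyclotomicExtension.Rat.isIntegralClosure_adjoin_singleton_of_prime_pow hg
  refine main_general (F := ℚ⟮ζ⟯) (2 ^ (r - 2)) ?_ ?_ (AdjoinSimple.gen ℚ ζ)
    (pb.basis.reindex (finCongr hdim)) ?_ ?_ ?_ (AdjoinSimple.gen ℚ (ζ - ζ⁻¹)) ?_ ?_ ?_ ?_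
  · calc 2 = 2 ^ 1 := rfl
      _ ≤ _ := Nat.pow_le_pow_right (by norm_num) (by omega)
  · exact (even_two).pow_of_ne_zero (by omega)
  · intro i
    simp [pb]
  · exact Subtype.ext (by simpa using hm1)
  · exact hg.ne_zero hpos.ne'
  · exact Subtype.ext rfl
  · rw [← isIntegral_algebraMap_iff (algebraMap ℚ⟮ζ - ζ⁻¹⟯ ℂ).injective]
    exact hint.sub hint'
  · let pb2 : PowerBasis ℚ ℚ⟮ζ - ζ⁻¹⟯ := adjoin.powerBasis (hint.sub hint').tower_top
    exact pb2.adjoin_gen_eq_top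
  · intro y hy
    obtain ⟨y', rfl⟩ := hic.isIntegral_iff.1 hy
    exact y'.2
end

section
/- Let r ≥ 3, let ζ be a primitive 2^r-th root of unity, and let K = ℚ(ζ − ζ^{-1}), of degree n = 2^{r−2} over ℚ. Then the absolute value of the discriminant of K is D_K = n^n · 2^{n−1}. -/
open NumberField IntermediateField Polynomial

noncomputable def FF : ℕ → ℤ[X]
  | 0 => X ^ 2 + C 2
  | k + 1 => FF k ^ 2 - C 2

lemma FF_monic_deg (k : ℕ) : (FF k).Monic ∧ (FF k).natDegree = 2 ^ (k + 1) := by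
  induction k with
  | zero => exact ⟨by unfold FF; monicity!, by unfold FF; compute_degree!⟩
  | succ k ih =>
    obtain ⟨h1, h2⟩ := ih
    have h3 : (FF k ^ 2).natDegree = 2 ^ (k + 1 + 1) := by
      rw [h1.natDegree_pow, h2]; ring
    have h4 : (C (2 : ℤ)).degree < (FF k ^ 2).degree := by
      rw [degree_eq_natDegree (h1.pow 2).ne_zero, h3]
      refine lt_of_le_of_lt degree_C_le ?_
      exact_mod_cast Nat.pos_of_ne_zero (by positivity)
    refine ⟨(h1.pow 2).sub_of_left h4, ?_⟩
    rw [FF, natDegree_sub_eq_left_of_natDegree_lt, h3]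
    rw [h3, natDegree_C]; positivity

lemma FF_map (k : ℕ) : (FF k).map (Int.castRingHom (ZMod 2)) = X ^ (2 ^ (k + 1)) := by
  have h2 : (2 : (ZMod 2)[X]) = 0 := by
    rw [← C_ofNat, show (2 : ZMod 2) = 0 from rfl, C_0]
  induction k with
  | zero => simp [FF, h2]
  | succ k ih =>
    simp [FF, Polynomial.map_sub, Polynomial.map_pow, ih, h2]; ring

lemma FF_coeff_zero (k : ℕ) : (FF k).coeff 0 = 2 := by
  induction k with
  | zero => simp [FF]
  | succ k ih => rw [coeff_zero_eq_eval_zero] at *; simp [FF, ih]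

lemma FF_eis (k : ℕ) : (FF k).IsEisensteinAt (Submodule.span ℤ {((2 : ℕ) : ℤ)}) := by
  refine (FF_monic_deg k).1.isEisensteinAt_of_mem_of_notMem ?_ ?_ ?_
  · exact Ideal.IsPrime.ne_top <| (Ideal.span_singleton_prime (by norm_num)).2 <|
        Nat.prime_iff_prime_int.1 Nat.prime_two
  · intro i hi
    have := congrArg (fun p => p.coeff i) (FF_map k)
    simp only [coeff_map, coeff_X_pow] at this
    rw [if_neg (by have := (FF_monic_deg k).2; omega)] at this
    rw [Ideal.submodule_span_eq, Ideal.mem_span_singleton]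
    exact (ZMod.intCast_zmod_eq_zero_iff_dvd _ 2).1 this
  · rw [FF_coeff_zero, Ideal.submodule_span_eq, Ideal.span_singleton_pow, Ideal.mem_span_singleton]
    norm_num

lemma FF_irred (k : ℕ) : Irreducible (FF k) := by
  refine (FF_eis k).irreducible ?_ (FF_monic_deg k).1.isPrimitive ?_
  · exact (Ideal.span_singleton_prime (by norm_num)).2 <|
        Nat.prime_iff_prime_int.1 Nat.prime_two
  · rw [(FF_monic_deg k).2]; positivity

lemma FF_der (k : ℕ) : (derivative (FF k)) ^ 2 * (X ^ 2 + 4) = 4 ^ (k + 1) * (FF k ^ 2 - 4) := by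
  induction k with
  | zero => simp [FF, derivative_pow]; ring
  | succ k ih =>
    have e : derivative (FF (k + 1)) = 2 * FF k * derivative (FF k) := by
      simp [FF, derivative_pow]
    have e2 : FF (k + 1) = FF k ^ 2 - 2 := by simp [FF]
    rw [e, e2]
    linear_combination 4 * FF k ^ 2 * ih

lemma FF_eval (k : ℕ) (c : ℂ) (hc : c ^ 2 = -4) : (aeval c (FF k)) ^ 2 = 4 := by
  cases k with
  | zero => simp only [FF, map_add, map_pow, aeval_X, aeval_C, hc]; norm_num
  | succ k =>
    have : aeval c (FF (k + 1)) = 2 := by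
      induction k with
      | zero => simp only [FF, map_add, map_sub, map_pow, aeval_X, aeval_C, hc]; norm_num
      | succ k ih => rw [FF]; simp only [map_sub, map_pow, aeval_C, ih]; norm_num
    rw [this]; norm_num

lemma FF_zeta (k : ℕ) (z : ℂ) (hz : z ≠ 0) :
    aeval (z - z⁻¹) (FF k) = z ^ (2 ^ (k + 1)) + z⁻¹ ^ (2 ^ (k + 1)) := by
  induction k with
  | zero => simp only [FF, map_add, map_pow, aeval_X, aeval_C]; simp; field_simp; ring
  | succ k ih =>
    rw [FF]
    simp only [map_sub, map_pow, ih, aeval_C]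
    rw [pow_succ 2 (k + 1), pow_mul, pow_mul]
    have : z ^ (2 ^ (k + 1)) * z⁻¹ ^ (2 ^ (k + 1)) = 1 := by
      rw [← mul_pow, mul_inv_cancel₀ hz, one_pow]
    simp
    simp at this
    linear_combination 2 * this

lemma FF_zeta' (r : ℕ) (hr : 3 ≤ r) (ζ : ℂ) (hζ : IsPrimitiveRoot ζ (2 ^ r)) :
    aeval (ζ - ζ⁻¹) (FF (r - 3)) = 0 := by
  have hz : ζ ≠ 0 := hζ.ne_zero (by positivity)
  rw [FF_zeta _ _ hz]
  have h4 : IsPrimitiveRoot (ζ ^ (2 ^ (r - 3 + 1))) 4 :=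
    hζ.pow (by positivity) (by
      rw [show (4 : ℕ) = 2 ^ 2 by norm_num, ← pow_add]; congr 1; omega)
  have h2 : (ζ ^ (2 ^ (r - 3 + 1))) ^ 2 = -1 :=
    (h4.pow (by norm_num) (show 4 = 2 * 2 by norm_num)).eq_neg_one_of_two_right
  rw [inv_pow]
  have h0 : ζ ^ (2 ^ (r - 3 + 1)) ≠ 0 := pow_ne_zero _ hz
  field_simp
  linear_combination h2

section
variable {K : Type*} [Field K] [NumberField K]

lemma norm_aux (B : PowerBasis ℚ K) :
    ((Algebra.norm ℚ (B.gen ^ 2 + 4) : ℚ) : ℂ) =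
      aeval (2 * Complex.I) (minpoly ℚ B.gen) * aeval (-(2 * Complex.I)) (minpoly ℚ B.gen) := by
  have hs : ((minpoly ℚ B.gen).map (algebraMap ℚ ℂ)).Splits := IsAlgClosed.splits _
  have hm := minpoly.monic B.isIntegral_gen
  have hsep : IsSeparable ℚ B.gen := Algebra.IsSeparable.isSeparable ℚ B.gen
  have h1 : ((Algebra.norm ℚ (B.gen ^ 2 + 4) : ℚ) : ℂ) =
      (((minpoly ℚ B.gen).aroots ℂ).map (fun x => x ^ 2 + 4)).prod := by
    have := Algebra.norm_eq_prod_embeddings ℚ ℂ (B.gen ^ 2 + 4)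
    rw [show ((Algebra.norm ℚ (B.gen ^ 2 + 4) : ℚ) : ℂ) = algebraMap ℚ ℂ _ from rfl, this]
    classical
    rw [Fintype.prod_equiv B.liftEquiv' _ (fun x => x.1 ^ 2 + 4)]
    · rw [Finset.prod_mem_multiset _ _ (fun x : ℂ => x ^ 2 + 4) (fun _ => rfl), Finset.prod_eq_multiset_prod,
        Multiset.toFinset_val, Multiset.dedup_eq_self.mpr]
      · exact nodup_roots (.map hsep)
    · intro σ; simp [PowerBasis.liftEquiv'_apply_coe, map_ofNat σ 4]
  rw [h1, hs.aeval_eq_prod_aroots_of_monic hm, hs.aeval_eq_prod_aroots_of_monic hm,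
    ← Multiset.prod_map_mul]
  congr 1
  refine Multiset.map_congr rfl fun x _ => ?_
  linear_combination (4 : ℂ) * Complex.I_sq

lemma discr_eq_of_adjoin (B : PowerBasis ℚ K) (hint : IsIntegral ℤ B.gen)
    (H : ∀ z : K, IsIntegral ℤ z → z ∈ Algebra.adjoin ℤ {B.gen}) :
    (NumberField.discr K : ℚ) = Algebra.discr ℚ B.basis := by
  rw [coe_discr]
  have hmin := minpoly.isIntegrallyClosed_eq_field_fractions' ℚ hint
  apply Algebra.discr_eq_discr_of_toMatrix_coeff_isIntegral
  · intro i j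
    rw [Module.Basis.toMatrix_apply, B.coe_basis]
    have := integralBasis_repr_apply K ⟨B.gen ^ (j : ℕ), hint.pow _⟩ i
    refine this.symm ▸ ?_
    exact isIntegral_algebraMap
  · intro i j
    rw [Module.Basis.toMatrix_apply, integralBasis_apply]
    have h := H (algebraMap (𝓞 K) K (RingOfIntegers.basis K j)) (RingOfIntegers.isIntegral_coe _)
    rw [Algebra.adjoin_singleton_eq_range_aeval] at h
    obtain ⟨P, hP⟩ := h
    rw [← hP]
    change IsIntegral ℤ (B.basis.repr (aeval B.gen P) i)
    rw [aeval_eq_sum_range, map_sum, Finset.sum_apply']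
    refine IsIntegral.sum _ fun n _ => ?_
    rw [Algebra.smul_def, IsScalarTower.algebraMap_apply ℤ ℚ K, ← Algebra.smul_def, map_smul,
      Finsupp.smul_apply, algebraMap_smul]
    exact (PowerBasis.repr_gen_pow_isIntegral hint hmin _ _).smul _

theorem key (k : ℕ) (B : PowerBasis ℚ K) (hB : aeval B.gen (FF k) = 0) :
    (NumberField.discr K).natAbs =
      (2 ^ (k + 1)) ^ (2 ^ (k + 1)) * 2 ^ (2 ^ (k + 1) - 1) := by
  obtain ⟨hmon, hdeg⟩ := FF_monic_deg k
  have hint : IsIntegral ℤ B.gen := ⟨FF k, hmon, hB⟩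
  have hmin : minpoly ℤ B.gen = FF k := by
    refine eq_of_monic_of_associated (minpoly.monic hint) hmon ?_
    exact (minpoly.irreducible hint).associated_of_dvd (FF_irred k)
      (minpoly.isIntegrallyClosed_dvd hint hB)
  have hminQ : minpoly ℚ B.gen = (FF k).map (algebraMap ℤ ℚ) := by
    rw [minpoly.isIntegrallyClosed_eq_field_fractions' ℚ hint, hmin]
  have hdim : Module.finrank ℚ K = 2 ^ (k + 1) := by
    rw [B.finrank, ← B.natDegree_minpoly, hminQ, hmon.natDegree_map, hdeg]
  set T : ℕ := (2 ^ (k + 1)) ^ (2 ^ (k + 1)) * 2 ^ (2 ^ (k + 1) - 1) with hT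
  have hT2 : T * 2 = (2 ^ (k + 2)) ^ (2 ^ (k + 1)) := by
    rw [hT, mul_assoc, ← pow_succ, Nat.sub_add_cancel Nat.one_le_two_pow, ← mul_pow]
    congr 1
  have hTp : ∃ m, T = 2 ^ m := ⟨_, by rw [hT, ← pow_mul, ← pow_add]⟩
  -- norms
  have hN4 : (Algebra.norm ℚ (B.gen ^ 2 + 4)) ^ 2 = 16 := by
    have h := norm_aux B
    rw [hminQ, aeval_map_algebraMap, aeval_map_algebraMap] at h
    have h1 := FF_eval k (2 * Complex.I) (by rw [mul_pow, Complex.I_sq]; norm_num)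
    have h2 := FF_eval k (-(2 * Complex.I)) (by rw [neg_sq, mul_pow, Complex.I_sq]; norm_num)
    have : ((Algebra.norm ℚ (B.gen ^ 2 + 4) : ℚ) : ℂ) ^ 2 = 16 := by
      rw [h, mul_pow, h1, h2]; norm_num
    exact_mod_cast this
  have hder : (aeval B.gen (derivative (FF k))) ^ 2 * (B.gen ^ 2 + 4) =
      algebraMap ℚ K (-4 ^ (k + 2)) := by
    have := congrArg (aeval B.gen) (FF_der k)
    simp only [map_mul, map_pow, map_add, map_sub, map_ofNat, aeval_X, hB] at this
    rw [this]
    simp only [map_neg, map_pow, map_ofNat]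
    ring
  set N := Algebra.norm ℚ (aeval B.gen (derivative (FF k))) with hN
  have hNN : N ^ 2 * Algebra.norm ℚ (B.gen ^ 2 + 4) = (-4 ^ (k + 2)) ^ (2 ^ (k + 1)) := by
    rw [hN, ← map_pow, ← map_mul, hder, Algebra.norm_algebraMap, hdim]
  have hN' : N ^ 4 = (T : ℚ) ^ 4 := by
    have e' : ((-(4 : ℚ) ^ (k + 2)) ^ (2 ^ (k + 1))) ^ 2 = ((T : ℚ) * 2) ^ 4 := by
      have ht : (T : ℚ) * 2 = (2 ^ (k + 2)) ^ (2 ^ (k + 1)) := by exact_mod_cast hT2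
      have h4 : (4 : ℚ) ^ (k + 2) = (2 ^ (k + 2)) ^ 2 := by
        rw [← pow_mul, mul_comm, pow_mul]; norm_num
      rw [ht, h4]
      generalize (2 : ℚ) ^ (k + 2) = b
      rw [pow_right_comm, neg_sq]
      ring
    have h := congrArg (· ^ 2) hNN
    simp only [mul_pow, hN4] at h
    rw [e'] at h
    linear_combination h / 16
  have hd : Algebra.discr ℚ B.basis = T ∨ Algebra.discr ℚ B.basis = -T := by
    have h := Algebra.discr_powerBasis_eq_norm ℚ B
    rw [hminQ, derivative_map, aeval_map_algebraMap, ← hN] at h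
    have h4 : |N| = T := by
      have : |N| ^ 4 = (T : ℚ) ^ 4 := by rw [← abs_pow, hN']; simp
      exact (pow_left_inj₀ (abs_nonneg _) (by positivity) (by norm_num)).1 this
    rw [← abs_eq (by positivity), h, abs_mul, abs_pow, h4]
    simp
  have hadj : ∀ z : K, IsIntegral ℤ z → z ∈ Algebra.adjoin ℤ {B.gen} := by
    intro z hz
    obtain ⟨m, hm⟩ := hTp
    have H := Algebra.discr_mul_isIntegral_mem_adjoin ℚ hint hz
    have H2 : (((2 : ℕ) : ℤ) ^ m) • z ∈ Algebra.adjoin ℤ {B.gen} := by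
      have e : (((2 : ℕ) : ℤ) ^ m) • z = (T : ℚ) • z := by
        rw [hm]; simp [Algebra.smul_def]
      rw [e]
      rcases hd with hd | hd
      · rwa [hd] at H
      · rw [hd, neg_smul] at H; simpa using neg_mem H
    exact mem_adjoin_of_smul_prime_pow_smul_of_minpoly_isEisensteinAt (K := ℚ)
      (Nat.prime_iff_prime_int.1 Nat.prime_two) hint hz H2 (hmin ▸ FF_eis k)
  have hfin := discr_eq_of_adjoin B hint hadj
  rcases hd with hd | hd
  · rw [hd] at hfin
    have : NumberField.discr K = T := by exact_mod_cast hfin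
    rw [this]; simp
  · rw [hd] at hfin
    have : NumberField.discr K = -T := by exact_mod_cast hfin
    rw [this]; simp

end

theorem discr_adjoin_zeta_sub_zeta_inv
    (r : ℕ) (hr : 3 ≤ r) (ζ : ℂ) (hζ : IsPrimitiveRoot ζ (2 ^ r))
    [NumberField ℚ⟮ζ - ζ⁻¹⟯] :
    (NumberField.discr ℚ⟮ζ - ζ⁻¹⟯).natAbs =
      (2 ^ (r - 2)) ^ (2 ^ (r - 2)) * 2 ^ (2 ^ (r - 2) - 1) := by
  have h0 := FF_zeta' r hr ζ hζ
  have hi : IsIntegral ℚ (ζ - ζ⁻¹) :=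
    (show IsIntegral ℤ (ζ - ζ⁻¹) from ⟨FF (r - 3), (FF_monic_deg _).1, h0⟩).tower_top
  have h1 : aeval (adjoin.powerBasis hi).gen (FF (r - 3)) = 0 := by
    rw [adjoin.powerBasis_gen]
    apply (algebraMap ℚ⟮ζ - ζ⁻¹⟯ ℂ).injective
    rw [map_zero, ← aeval_algebraMap_apply, AdjoinSimple.algebraMap_gen, h0]
  have := key (r - 3) (adjoin.powerBasis hi) h1
  rwa [show r - 3 + 1 = r - 2 by omega] at this
end
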